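/- arXiv:1203.1795 — 3 statements merged into one kernel-verified Lean document; each statement's English description precedes it below -/
import Mathlib

section
/- Let j > 0, K ≥ 1 an integer, α ∈ (1/2,1) the unique solution of α + j·α^K = j + 1/2, and ρ*(r) = j·(1−α^K)·r + 1/2. Then for every t ≥ 0 and every r ∈ [−1,1], ρ*(r) = ∫_{−1}^{1} P_t(r, r′)·ρ*(r′) dr′ + (j/2)·(1 − α^K)·∫_0^t [P_s(r, 1) − P_s(r, −1)] ds. In particular ρ* is a stationary solution of the macroscopic integral equation. -/
open MeasureTheory

/-- The Gaussian heat kernel on the real line. -/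
noncomputable def G (t r r' : ℝ) : ℝ :=
  Real.exp (-(r - r') ^ 2 / (2 * t)) / Real.sqrt (2 * Real.pi * t)

/-- The Neumann heat kernel on `[-1,1]`, obtained from the Gaussian kernel by
the reflection map: for `r' ∈ (-1,1)`,
`P t r r' = ∑_{n∈ℤ} [G t r (r'+4n) + G t r (2−r'+4n)]`, while at the boundary
`P t r (±1) = ∑_{n∈ℤ} 2·G t r (±1+4n)`. -/
noncomputable def P (t r r' : ℝ) : ℝ :=
  if r' = 1 ∨ r' = -1 then ∑' n : ℤ, 2 * G t r (r' + 4 * n)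
  else ∑' n : ℤ, (G t r (r' + 4 * n) + G t r (2 - r' + 4 * n))

/-!
The modes `φₙ(x) = cos(πn(x+1)/2)` are the Neumann eigenfunctions of `-½ d²/dx²` on `[-1,1]`, with
eigenvalues `λₙ = π²n²/8`, and Poisson summation turns the reflected Gaussian series into
`P_t(r,x) = ½ + ∑_{n≥1} exp(-λₙt) φₙ(r) φₙ(x)`. Integrating an affine profile `c x + b` against this
series, every `n ≥ 1` contributes `c exp(-λₙt) (φₙ(-r) - φₙ(r)) / (2λₙ)`, while the boundary flux
contributes `(c/2) (1 - exp(-λₙt)) (φₙ(-r) - φₙ(r)) / λₙ`. The time dependence cancels in the sum,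
and what remains is the cosine series of `c r`.
-/

section

open Real Set

/-! ### The periodized Gaussian -/

theorem hasSum_int_G_add_mul {t : ℝ} (ht : 0 < t) {L : ℝ} (hL : 0 < L) (r x : ℝ) :
    HasSum (fun n : ℤ ↦ G t r (x + L * n))
      (HurwitzZeta.cosKernel ((x - r) / L : ℝ) (2 * π * t / L ^ 2) / L) := by
  have hτ : 0 < L ^ 2 / (2 * π * t) := by positivity
  have hsqrt : √(L ^ 2 / (2 * π * t)) * √(2 * π * t) = L := by
    rw [← sqrt_mul hτ.le, div_mul_cancel₀ _ (by positivity), sqrt_sq hL.le]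
  convert! (HurwitzZeta.hasSum_int_evenKernel ((x - r) / L) hτ).div_const √(2 * π * t) using 1
  · ext n
    rw [G]
    congr 2
    field_simp
    ring
  · rw [HurwitzZeta.evenKernel_functional_equation, ← sqrt_eq_rpow, one_div_mul_eq_div, div_div,
      hsqrt, one_div_div]

theorem P_eq_cosKernel_add_cosKernel {t : ℝ} (ht : 0 < t) (r x : ℝ) :
    P t r x = (HurwitzZeta.cosKernel ((x - r) / 4 : ℝ) (π * t / 8) +
      HurwitzZeta.cosKernel ((2 - x - r) / 4 : ℝ) (π * t / 8)) / 4 := by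
  have hG (y : ℝ) : HasSum (fun n : ℤ ↦ G t r (y + 4 * n))
      (HurwitzZeta.cosKernel ((y - r) / 4 : ℝ) (π * t / 8) / 4) := by
    convert! hasSum_int_G_add_mul ht four_pos r y using 3
    ring
  rw [P]
  split_ifs with hx
  · have hreflect : (((2 - x - r) / 4 : ℝ) : UnitAddCircle) = ((x - r) / 4 : ℝ) := by
      obtain rfl | rfl := hx
      · norm_num
      · rw [← AddCircle.coe_add_period 1 ((-1 - r) / 4)]
        ring_nf
    rw [((hG x).mul_left 2).tsum_eq, hreflect]
    ring
  · rw [((hG x).add (hG (2 - x))).tsum_eq]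
    ring

/-! ### Neumann modes -/

/-- The Neumann eigenfunctions `φₙ` of `-½ d²/dx²` on `[-1,1]`, normalized by `φₙ(-1) = 1`;
for `n ≥ 1` they are orthonormal in `L²(-1,1)`. -/
noncomputable def neumannMode (n : ℕ) (x : ℝ) : ℝ :=
  cos (π * n * (x + 1) / 2)

/-- The eigenvalue `λₙ` of `-½ d²/dx²` at `neumannMode n`. -/
noncomputable def neumannEigenvalue (n : ℕ) : ℝ :=
  π ^ 2 * n ^ 2 / 8

theorem neumannEigenvalue_pos {n : ℕ} (hn : n ≠ 0) : 0 < neumannEigenvalue n := by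
  rw [neumannEigenvalue]
  positivity

theorem continuous_neumannMode (n : ℕ) : Continuous (neumannMode n) := by
  unfold neumannMode
  fun_prop

theorem abs_neumannMode_le_one (n : ℕ) (x : ℝ) : |neumannMode n x| ≤ 1 :=
  abs_cos_le_one _

theorem neumannMode_neg_one (n : ℕ) : neumannMode n (-1) = 1 := by
  simp [neumannMode]

theorem neumannMode_mul_neumannMode_one (n : ℕ) (x : ℝ) :
    neumannMode n x * neumannMode n 1 = neumannMode n (-x) := by
  have hone : π * n * (1 + 1) / 2 = n * π := by ring
  have hneg : π * n * (-x + 1) / 2 = n * π - π * n * (x + 1) / 2 := by ring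
  rw [neumannMode, neumannMode, neumannMode, hone, hneg, cos_nat_mul_pi, cos_nat_mul_pi_sub,
    mul_comm]

theorem neumannMode_mul_boundary_sub (n : ℕ) (x : ℝ) :
    neumannMode n x * (neumannMode n 1 - neumannMode n (-1)) =
      neumannMode n (-x) - neumannMode n x := by
  rw [mul_sub, neumannMode_mul_neumannMode_one, neumannMode_neg_one, mul_one]

theorem neumannMode_mul_neumannMode (n : ℕ) (r x : ℝ) :
    neumannMode n r * neumannMode n x =
      (cos (π * n * (x - r) / 2) + cos (π * n * (2 - x - r) / 2)) / 2 := by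
  have hsub : π * n * (x - r) / 2 = π * n * (x + 1) / 2 - π * n * (r + 1) / 2 := by ring
  have hadd : π * n * (2 - x - r) / 2 =
      n * (2 * π) - (π * n * (x + 1) / 2 + π * n * (r + 1) / 2) := by ring
  rw [neumannMode, neumannMode, hsub, hadd, cos_nat_mul_two_pi_sub, cos_sub, cos_add]
  ring

theorem integral_neumannMode_mul_affine {n : ℕ} (hn : n ≠ 0) (c b : ℝ) :
    ∫ x in (-1 : ℝ)..1, neumannMode n x * (c * x + b) =
      c * (neumannMode n 1 - neumannMode n (-1)) / (2 * neumannEigenvalue n) := by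
  set w : ℝ := π * n / 2 with hw
  have hw0 : w ≠ 0 := by positivity
  have hmode (x : ℝ) : neumannMode n x = cos (w * (x + 1)) := by rw [neumannMode, hw]; ring_nf
  have heigenvalue : 2 * neumannEigenvalue n = w ^ 2 := by rw [neumannEigenvalue, hw]; ring
  have hderiv (x : ℝ) : HasDerivAt
      (fun x ↦ (c * x + b) * sin (w * (x + 1)) / w + c * cos (w * (x + 1)) / w ^ 2)
      (cos (w * (x + 1)) * (c * x + b)) x := by
    have hphase : HasDerivAt (fun x ↦ w * (x + 1)) w x := by
      simpa using ((hasDerivAt_id x).add_const 1).const_mul w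
    have haffine : HasDerivAt (fun x ↦ c * x + b) c x := by
      simpa using ((hasDerivAt_id x).const_mul c).add_const b
    convert! ((haffine.mul hphase.sin).div_const w).add
      ((hphase.cos.const_mul c).div_const (w ^ 2)) using 1
    field_simp
    ring
  have hsin_one : sin (w * (1 + 1)) = 0 := by
    rw [show w * (1 + 1) = n * π by rw [hw]; ring, sin_nat_mul_pi]
  simp_rw [heigenvalue, hmode]
  rw [intervalIntegral.integral_eq_sub_of_hasDerivAt (fun x _ ↦ hderiv x)
    (Continuous.intervalIntegrable (by fun_prop) _ _)]
  simp only [hsin_one, neg_add_cancel, mul_zero, sin_zero]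
  ring

/-! ### Cosine series -/

theorem hasSum_neumannMode_div_neumannEigenvalue {r : ℝ} (hr : r ∈ Icc (-1 : ℝ) 3) :
    HasSum (fun n : ℕ ↦ neumannMode (n + 1) r / neumannEigenvalue (n + 1))
      (8 * (((r + 1) / 4) ^ 2 - (r + 1) / 4 + 1 / 6)) := by
  have hbernoulli (x : ℝ) :
      ((Polynomial.bernoulli (2 * 1)).map (algebraMap ℚ ℝ)).eval x = x ^ 2 - x + 1 / 6 := by
    simp [Polynomial.bernoulli, Finset.sum_range_succ, bernoulli_two, bernoulli_one, sub_eq_add_neg]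
  have hx : (r + 1) / 4 ∈ Icc (0 : ℝ) 1 := ⟨by linarith [hr.1], by linarith [hr.2]⟩
  have hcos := hasSum_one_div_nat_pow_mul_cos one_ne_zero hx
  rw [hbernoulli, ← hasSum_nat_add_iff' 1] at hcos
  convert! hcos.mul_left (8 / π ^ 2) using 1
  · ext n
    rw [neumannMode, neumannEigenvalue]
    field_simp
    ring_nf
  · simp only [Finset.sum_range_one, Nat.cast_zero, mul_one, zero_pow two_ne_zero, div_zero,
      zero_mul, sub_zero, Nat.factorial_two, Nat.cast_ofNat]
    field

theorem hasSum_neumannMode_neg_sub_div_neumannEigenvalue {r : ℝ} (hr : r ∈ Icc (-1 : ℝ) 1) :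
    HasSum (fun n : ℕ ↦
      (neumannMode (n + 1) (-r) - neumannMode (n + 1) r) / neumannEigenvalue (n + 1)) (2 * r) := by
  have hneg := hasSum_neumannMode_div_neumannEigenvalue (r := -r)
    ⟨by linarith [hr.2], by linarith [hr.1]⟩
  have hpos := hasSum_neumannMode_div_neumannEigenvalue (r := r) ⟨hr.1, by linarith [hr.2]⟩
  convert! hneg.sub hpos using 1
  · ext n
    rw [sub_div]
  · ring

theorem summable_inv_neumannEigenvalue : Summable fun n : ℕ ↦ (neumannEigenvalue (n + 1))⁻¹ := by
  simpa [neumannMode_neg_one] using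
    (hasSum_neumannMode_div_neumannEigenvalue (r := -1) (by norm_num)).summable

/-! ### Spectral expansion of the Neumann heat kernel -/

theorem hasSum_P {t : ℝ} (ht : 0 < t) (r x : ℝ) :
    HasSum (fun n : ℕ ↦ exp (-neumannEigenvalue (n + 1) * t) *
      (neumannMode (n + 1) r * neumannMode (n + 1) x)) (P t r x - 1 / 2) := by
  have hτ : 0 < π * t / 8 := by positivity
  rw [P_eq_cosKernel_add_cosKernel ht]
  convert! ((HurwitzZeta.hasSum_nat_cosKernel₀ ((x - r) / 4) hτ).add
    (HurwitzZeta.hasSum_nat_cosKernel₀ ((2 - x - r) / 4) hτ)).div_const 4 using 1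
  · ext n
    rw [neumannMode_mul_neumannMode, neumannEigenvalue]
    push_cast
    ring_nf
  · ring

theorem summable_exp_neg_neumannEigenvalue_mul {t : ℝ} (ht : 0 < t) :
    Summable fun n : ℕ ↦ exp (-neumannEigenvalue (n + 1) * t) := by
  simpa [neumannMode_neg_one] using (hasSum_P ht (-1) (-1)).summable

theorem norm_exp_mul_neumannMode_mul_le (n : ℕ) (t r x : ℝ) :
    ‖exp (-neumannEigenvalue n * t) * (neumannMode n r * neumannMode n x)‖ ≤
      exp (-neumannEigenvalue n * t) := by
  rw [norm_mul, norm_mul, norm_of_nonneg (exp_pos _).le]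
  exact mul_le_of_le_one_right (exp_pos _).le <| mul_le_one₀ (abs_neumannMode_le_one n r)
    (norm_nonneg _) (abs_neumannMode_le_one n x)

theorem continuous_P {t : ℝ} (ht : 0 < t) (r : ℝ) : Continuous (P t r) := by
  have hseries := continuous_tsum
    (fun n ↦ ((continuous_neumannMode (n + 1)).const_mul (neumannMode (n + 1) r)).const_mul
      (exp (-neumannEigenvalue (n + 1) * t)))
    (summable_exp_neg_neumannEigenvalue_mul ht)
    (fun n x ↦ norm_exp_mul_neumannMode_mul_le (n + 1) t r x)
  simp_rw [(hasSum_P ht r _).tsum_eq] at hseries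
  simpa using hseries.add_const (1 / 2)

theorem hasSum_integral_P_mul {t : ℝ} (ht : 0 < t) (r : ℝ) {a b : ℝ} {f : ℝ → ℝ}
    (hf : IntervalIntegrable f volume a b) :
    HasSum (fun n : ℕ ↦ exp (-neumannEigenvalue (n + 1) * t) *
        (neumannMode (n + 1) r * ∫ x in a..b, neumannMode (n + 1) x * f x))
      ((∫ x in a..b, P t r x * f x) - (∫ x in a..b, f x) / 2) := by
  have hPf : IntervalIntegrable (fun x ↦ P t r x * f x) volume a b :=
    hf.continuousOn_mul (continuous_P ht r).continuousOn
  have hsum := intervalIntegral.hasSum_integral_of_dominated_convergence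
    (F := fun n x ↦ exp (-neumannEigenvalue (n + 1) * t) *
      (neumannMode (n + 1) r * neumannMode (n + 1) x) * f x)
    (f := fun x ↦ (P t r x - 1 / 2) * f x)
    (fun n x ↦ exp (-neumannEigenvalue (n + 1) * t) * ‖f x‖)
    (fun n ↦ (((continuous_neumannMode (n + 1)).const_mul _).const_mul _).aestronglyMeasurable.mul
      hf.def'.aestronglyMeasurable)
    (fun n ↦ .of_forall fun x _ ↦ (norm_mul _ _).trans_le <|
      mul_le_mul_of_nonneg_right (norm_exp_mul_neumannMode_mul_le (n + 1) t r x) (norm_nonneg _))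
    (.of_forall fun x _ ↦ (summable_exp_neg_neumannEigenvalue_mul ht).mul_right _)
    (by simpa only [tsum_mul_right] using hf.norm.const_mul _)
    (.of_forall fun x _ ↦ (hasSum_P ht r x).mul_right (f x))
  convert! hsum using 1
  · simp_rw [mul_assoc, intervalIntegral.integral_const_mul]
  · rw [← intervalIntegral.integral_div, ← intervalIntegral.integral_sub hPf (hf.div_const 2)]
    exact intervalIntegral.integral_congr fun x _ ↦ by ring

theorem hasSum_integral_P_mul_affine {t : ℝ} (ht : 0 < t) (c b r : ℝ) :
    HasSum (fun n : ℕ ↦ c / 2 * (exp (-neumannEigenvalue (n + 1) * t) *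
        ((neumannMode (n + 1) (-r) - neumannMode (n + 1) r) / neumannEigenvalue (n + 1))))
      ((∫ x in (-1 : ℝ)..1, P t r x * (c * x + b)) - b) := by
  have hmean : (∫ x in (-1 : ℝ)..1, c * x + b) / 2 = b := by
    rw [intervalIntegral.integral_add (Continuous.intervalIntegrable (by fun_prop) _ _)
      (Continuous.intervalIntegrable (by fun_prop) _ _), intervalIntegral.integral_const_mul,
      integral_id]
    norm_num
  have hsum := hasSum_integral_P_mul ht r (a := -1) (b := 1) (f := fun x ↦ c * x + b)
    (Continuous.intervalIntegrable (by fun_prop) _ _)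
  rw [hmean] at hsum
  convert! hsum using 1
  ext n
  rw [integral_neumannMode_mul_affine n.succ_ne_zero, ← neumannMode_mul_boundary_sub]
  field

/-! ### The boundary flux -/

theorem integral_exp_neg_mul {lam : ℝ} (hlam : lam ≠ 0) (t : ℝ) :
    ∫ s in (0 : ℝ)..t, exp (-lam * s) = (1 - exp (-lam * t)) / lam := by
  rw [intervalIntegral.integral_comp_mul_left exp (neg_ne_zero.2 hlam), integral_exp]
  simp only [mul_zero, exp_zero, smul_eq_mul]
  field

theorem hasSum_integral_tsum_exp_neg_mul {ι : Type*} [Countable ι] {a lam : ι → ℝ}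
    (hlam : ∀ i, 0 < lam i) (hsum : Summable fun i ↦ |a i| / lam i) {t : ℝ} (ht : 0 ≤ t) :
    HasSum (fun i ↦ a i * ((1 - exp (-lam i * t)) / lam i))
      (∫ s in (0 : ℝ)..t, ∑' i, exp (-lam i * s) * a i) := by
  have hintegral (i : ι) (b : ℝ) :
      ∫ s in Ioc 0 t, exp (-lam i * s) * b = b * ((1 - exp (-lam i * t)) / lam i) := by
    rw [integral_mul_const, ← intervalIntegral.integral_of_le ht,
      integral_exp_neg_mul (hlam i).ne', mul_comm]
  have hnorm (i : ι) :
      ∫ s in Ioc 0 t, ‖exp (-lam i * s) * a i‖ = |a i| * ((1 - exp (-lam i * t)) / lam i) := by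
    simp_rw [norm_mul, norm_of_nonneg (exp_pos _).le, norm_eq_abs, hintegral]
  have hbound (i : ι) : |a i| * ((1 - exp (-lam i * t)) / lam i) ≤ |a i| / lam i := by
    rw [← mul_div_assoc]
    gcongr
    · exact (hlam i).le
    · exact mul_le_of_le_one_right (abs_nonneg _) (sub_le_self 1 (exp_pos _).le)
  have h := hasSum_integral_of_summable_integral_norm (μ := volume.restrict (Ioc 0 t))
    (F := fun i s ↦ exp (-lam i * s) * a i)
    (fun i ↦ Continuous.integrableOn_Ioc (by fun_prop))
    (.of_nonneg_of_le (fun i ↦ integral_nonneg fun _ ↦ norm_nonneg _)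
      (fun i ↦ (hnorm i).trans_le (hbound i)) hsum)
  simpa only [hintegral, ← intervalIntegral.integral_of_le ht] using h

theorem hasSum_P_one_sub_P_neg_one {t : ℝ} (ht : 0 < t) (r : ℝ) :
    HasSum (fun n : ℕ ↦ exp (-neumannEigenvalue (n + 1) * t) *
      (neumannMode (n + 1) (-r) - neumannMode (n + 1) r)) (P t r 1 - P t r (-1)) := by
  convert! (hasSum_P ht r 1).sub (hasSum_P ht r (-1)) using 1
  · ext n
    rw [← neumannMode_mul_boundary_sub, mul_sub, mul_sub]
  · ring

theorem hasSum_integral_P_one_sub_P_neg_one {t : ℝ} (ht : 0 ≤ t) (r : ℝ) :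
    HasSum (fun n : ℕ ↦ (neumannMode (n + 1) (-r) - neumannMode (n + 1) r) *
        ((1 - exp (-neumannEigenvalue (n + 1) * t)) / neumannEigenvalue (n + 1)))
      (∫ s in (0 : ℝ)..t, (P s r 1 - P s r (-1))) := by
  have hpos (n : ℕ) : 0 < neumannEigenvalue (n + 1) := neumannEigenvalue_pos n.succ_ne_zero
  have hbound (n : ℕ) : |neumannMode n (-r) - neumannMode n r| ≤ 2 :=
    calc
      |neumannMode n (-r) - neumannMode n r| ≤ |neumannMode n (-r)| + |neumannMode n r| :=
        abs_sub _ _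
      _ ≤ 2 := by linarith [abs_neumannMode_le_one n (-r), abs_neumannMode_le_one n r]
  have hsummable : Summable fun n : ℕ ↦
      |neumannMode (n + 1) (-r) - neumannMode (n + 1) r| / neumannEigenvalue (n + 1) :=
    .of_nonneg_of_le (fun n ↦ div_nonneg (abs_nonneg _) (hpos n).le)
      (fun n ↦ div_le_div_of_nonneg_right (hbound (n + 1)) (hpos n).le)
      (summable_inv_neumannEigenvalue.mul_left 2)
  convert! hasSum_integral_tsum_exp_neg_mul hpos hsummable ht using 1
  refine intervalIntegral.integral_congr_uIoo fun s hs ↦ ?_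
  rw [uIoo_of_le ht] at hs
  exact (hasSum_P_one_sub_P_neg_one hs.1 r).tsum_eq.symm

end

theorem stationary_profile_solves_general (c b : ℝ) {t : ℝ} (ht : 0 < t) {r : ℝ}
    (hr : r ∈ Set.Icc (-1 : ℝ) 1) :
    c * r + b = (∫ x in (-1 : ℝ)..1, P t r x * (c * x + b)) +
      c / 2 * ∫ s in (0 : ℝ)..t, (P s r 1 - P s r (-1)) := by
  have hspace := hasSum_integral_P_mul_affine ht c b r
  have htime := (hasSum_integral_P_one_sub_P_neg_one ht.le r).mul_left (c / 2)
  have hlinear := (hasSum_neumannMode_neg_sub_div_neumannEigenvalue hr).mul_left (c / 2)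
  have htotal := (hspace.add htime).unique <| hlinear.congr_fun fun n ↦ by ring
  linarith

/-- The linear profile `ρ*(r) = j·(1−α^K)·r + 1/2`, with `α ∈ (1/2,1)` the unique
solution of `α + j·α^K = j + 1/2`, is a stationary solution of the macroscopic
integral equation: for every `t > 0` and `r ∈ [−1,1]`,
`ρ*(r) = ∫_{−1}^{1} P_t(r,r')·ρ*(r') dr' + (j/2)·(1−α^K)·∫_0^t [P_s(r,1) − P_s(r,−1)] ds`. -/
theorem stationary_profile_solves (j : ℝ) (hj : 0 < j) (K : ℕ) (hK : 1 ≤ K)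
    (α : ℝ) (hα : α ∈ Set.Ioo (1 / 2 : ℝ) 1) (hαeq : α + j * α ^ K = j + 1 / 2)
    (t : ℝ) (ht : 0 < t) (r : ℝ) (hr : r ∈ Set.Icc (-1 : ℝ) 1) :
    j * (1 - α ^ K) * r + 1 / 2
      = (∫ r' in (-1 : ℝ)..1, P t r r' * (j * (1 - α ^ K) * r' + 1 / 2))
        + j / 2 * (1 - α ^ K) * ∫ s in (0 : ℝ)..t, (P s r 1 - P s r (-1)) := by
  rw [stationary_profile_solves_general (j * (1 - α ^ K)) (1 / 2) ht hr]
  ring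
end

section
/- Let j > 0, K ≥ 1 an integer, and T > 0. Given a continuous ρ₀ : [−1,1] → [0,1], there exists exactly one pair of continuous functions (u₊, u₋) : [0,T] → [0,1]² satisfying, for all t ∈ [0,T], u_±(t) = ∫_{−1}^{1} P_t(±1, r)·ρ₀(r) dr + (j/2)·∫_0^t { P_s(±1, 1)·(1 − u₊(t−s)^K) − P_s(±1, −1)·(1 − (1 − u₋(t−s))^K) } ds. -/
open MeasureTheory

/-!
Unfolding `[-1, 1]` along the reflections in `±1` turns the Neumann semigroup into the heat
semigroup on the line acting on `4`-periodic functions, and turns the two boundary integrals into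
heat potentials whose kernel is at most `C / √s`. Composing the nonlinearities with the projection
to `[0, 1]` makes them globally Lipschitz, and a singularity `1 / √s` costs only a factor `1 / √μ`
in the sup norm weighted by `exp (μ t)`; so for large `μ` the resulting map on boundary values is a
contraction. The field driven by its fixed point obeys a minimum principle, since the sink at `-1`
is switched off when the field is negative there; exchanging the roles of `ρ` and `1 - ρ` bounds the
field from above. Hence the fixed point takes its values in `[0, 1]`, where the projection is the
identity.
-/

open ProbabilityTheory Filter Topology Set
open scoped BoundedContinuousFunction NNReal

namespace BoundarySystem

section Kernel

variable {t x : ℝ}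

lemma G_eq_gaussianPDFReal (t r r' : ℝ) : G t r r' = gaussianPDFReal r' t.toNNReal r := by
  rcases le_total t 0 with ht | ht
  · have : 2 * Real.pi * t ≤ 0 := by nlinarith [Real.pi_pos]
    simp [G, Real.toNNReal_of_nonpos ht, Real.sqrt_eq_zero_of_nonpos this]
  · rw [G, gaussianPDFReal, Real.coe_toNNReal t ht, div_eq_inv_mul]

lemma G_comm (t r r' : ℝ) : G t r r' = G t r' r := by
  rw [G, G, ← neg_sub, neg_sq]

lemma G_nonneg (t r r' : ℝ) : 0 ≤ G t r r' := by
  unfold G; positivity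

lemma G_of_nonpos (ht : t ≤ 0) (r r' : ℝ) : G t r r' = 0 := by
  simp [G_eq_gaussianPDFReal, Real.toNNReal_of_nonpos ht]

lemma measurable_G : Measurable fun p : ℝ × ℝ × ℝ => G p.1 p.2.1 p.2.2 := by
  unfold G; fun_prop

lemma continuous_G (t : ℝ) : Continuous fun p : ℝ × ℝ => G t p.1 p.2 := by
  unfold G; fun_prop

lemma two_mul_sqrt_le (ht : 0 ≤ t) : 2 * √t ≤ √(2 * Real.pi * t) := by
  refine Real.le_sqrt_of_sq_le ?_
  rw [mul_pow, Real.sq_sqrt ht]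
  nlinarith [Real.pi_gt_three]

lemma G_le_inv_sqrt (t r r' : ℝ) : G t r r' ≤ (√t)⁻¹ := by
  rcases le_or_gt t 0 with ht | ht
  · rw [G_of_nonpos ht]; positivity
  have hexp : Real.exp (-(r - r') ^ 2 / (2 * t)) ≤ 1 :=
    Real.exp_le_one_iff.2 (div_nonpos_of_nonpos_of_nonneg (by nlinarith) (by positivity))
  calc G t r r' ≤ 1 * (2 * √t)⁻¹ := by
        rw [G, div_eq_mul_inv]; gcongr; exact two_mul_sqrt_le ht.le
    _ ≤ (√t)⁻¹ := by
        rw [one_mul, mul_inv]; exact mul_le_of_le_one_left (by positivity) (by norm_num)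

lemma G_le_sqrt_div_sq {r r' : ℝ} (h : r ≠ r') (t : ℝ) : G t r r' ≤ √t / (r - r') ^ 2 := by
  rcases le_or_gt t 0 with ht | ht
  · rw [G_of_nonpos ht]; positivity
  have hy : 0 < (r - r') ^ 2 := by have := sub_ne_zero.2 h; positivity
  have hexp : Real.exp (-(r - r') ^ 2 / (2 * t)) ≤ 2 * t / (r - r') ^ 2 := by
    rw [neg_div, Real.exp_neg, ← inv_div (_ ^ 2)]
    refine inv_anti₀ (by positivity) ?_
    linarith [Real.add_one_le_exp ((r - r') ^ 2 / (2 * t))]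
  calc G t r r' ≤ 2 * t / (r - r') ^ 2 * (2 * √t)⁻¹ := by
        rw [G, div_eq_mul_inv]; gcongr; exact two_mul_sqrt_le ht.le
    _ = √t / (r - r') ^ 2 := by
        have := Real.sq_sqrt ht.le
        have := Real.sqrt_pos.2 ht
        field_simp
        linarith

/-- The sum over the images of a boundary point under the reflections in `±1`: the kernel
`P t r (±1)` is `boundaryKernel t (r ∓ 1)`. It vanishes for `t ≤ 0`. -/
noncomputable def boundaryKernel (t x : ℝ) : ℝ := ∑' n : ℤ, 2 * G t x (4 * n)

lemma P_right_eq_boundaryKernel (t r : ℝ) : P t r 1 = boundaryKernel t (r - 1) := by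
  rw [P, if_pos (Or.inl rfl), boundaryKernel]
  simp only [G, sub_sub]

lemma P_left_eq_boundaryKernel (t r : ℝ) : P t r (-1) = boundaryKernel t (r - -1) := by
  rw [P, if_pos (Or.inr rfl), boundaryKernel]
  simp only [G, sub_sub]

lemma boundaryKernel_nonneg (t x : ℝ) : 0 ≤ boundaryKernel t x :=
  tsum_nonneg fun _ => mul_nonneg zero_le_two (G_nonneg _ _ _)

lemma boundaryKernel_of_nonpos (ht : t ≤ 0) (x : ℝ) : boundaryKernel t x = 0 := by
  simp [boundaryKernel, G_of_nonpos ht]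

lemma measurable_boundaryKernel : Measurable fun p : ℝ × ℝ => boundaryKernel p.1 p.2 :=
  Measurable.tsum fun _ => (measurable_G.comp
    (measurable_fst.prodMk (measurable_snd.prodMk measurable_const))).const_mul 2

lemma boundaryKernel_periodic (t : ℝ) : Function.Periodic (boundaryKernel t) 4 := fun x => by
  unfold boundaryKernel
  rw [← (Equiv.addRight (1 : ℤ)).tsum_eq]
  refine tsum_congr fun n => ?_
  simp only [G, Equiv.coe_addRight, Int.cast_add, Int.cast_one]
  ring_nf

lemma two_mul_G_image_le (hx : |x| ≤ 3) (t : ℝ) (n : ℤ) :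
    2 * G t x (4 * n) ≤
      Pi.single (M := fun _ : ℤ => ℝ) 0 (2 * G t x 0) n + 2 * √t * (1 / n ^ 2) := by
  rcases eq_or_ne n 0 with rfl | hn
  · simp
  have h1 : (1 : ℝ) ≤ |(n : ℝ)| := by exact_mod_cast Int.one_le_abs hn
  have hdist : |(n : ℝ)| ≤ |x - 4 * n| := by
    have := abs_sub_abs_le_abs_sub (4 * (n : ℝ)) x
    rw [abs_mul, abs_of_pos (four_pos : (0 : ℝ) < 4), abs_sub_comm] at this
    linarith
  have hne : x ≠ 4 * n := fun h => by simp [h] at hdist; simp_all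
  rw [Pi.single_eq_of_ne hn, zero_add, mul_assoc]
  gcongr
  calc G t x (4 * n) ≤ √t / (x - 4 * n) ^ 2 := G_le_sqrt_div_sq hne t
    _ ≤ √t / n ^ 2 := by gcongr √t / ?_; exact sq_le_sq.2 hdist
    _ = √t * (1 / n ^ 2) := by ring

lemma hasSum_image_bound (a b : ℝ) :
    HasSum (fun n : ℤ => Pi.single (M := fun _ : ℤ => ℝ) 0 a n + b * (1 / n ^ 2))
      (a + b * ∑' n : ℤ, 1 / (n : ℝ) ^ 2) :=
  (hasSum_pi_single 0 a).add
    ((Real.summable_one_div_int_pow.2 one_lt_two).hasSum.mul_left b)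

lemma boundaryKernel_sub_four_mul (t x : ℝ) (n : ℤ) :
    boundaryKernel t (x - 4 * n) = boundaryKernel t x := by
  rw [mul_comm]; exact (boundaryKernel_periodic t).sub_int_mul_eq n

lemma exists_abs_sub_four_mul_le (x : ℝ) : ∃ n : ℤ, |x - 4 * n| ≤ 2 := by
  refine ⟨round (x / 4), ?_⟩
  rw [show x - 4 * round (x / 4) = 4 * (x / 4 - round (x / 4)) by ring, abs_mul]
  have := abs_sub_round (x / 4)
  norm_num at this ⊢
  linarith

lemma summable_two_mul_G_image (t x : ℝ) : Summable fun n : ℤ => 2 * G t x (4 * n) := by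
  obtain ⟨m, hm⟩ := exists_abs_sub_four_mul_le x
  have hsum : Summable fun n : ℤ => 2 * G t (x - 4 * m) (4 * n) :=
    Summable.of_nonneg_of_le (fun _ => mul_nonneg zero_le_two (G_nonneg _ _ _))
      (two_mul_G_image_le (hm.trans (by norm_num)) t)
      (hasSum_image_bound (2 * G t (x - 4 * m) 0) (2 * √t)).summable
  convert (Equiv.subRight m).summable_iff.2 hsum using 2 with n
  simp only [G, Function.comp_apply, Equiv.subRight_apply, Int.cast_sub]
  ring_nf

lemma boundaryKernel_le (hx : |x| ≤ 3) (t : ℝ) :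
    boundaryKernel t x ≤ 2 * G t x 0 + 2 * √t * ∑' n : ℤ, 1 / (n : ℝ) ^ 2 :=
  hasSum_le (two_mul_G_image_le hx t) (summable_two_mul_G_image t x).hasSum
    (hasSum_image_bound (2 * G t x 0) (2 * √t))

lemma continuous_boundaryKernel (t : ℝ) : Continuous (boundaryKernel t) := by
  have hcont : ContinuousOn (boundaryKernel t) (Metric.ball 0 3) := by
    refine continuousOn_tsum (fun n => ?_) (hasSum_image_bound (2 * (√t)⁻¹) (2 * √t)).summable
      fun n x hx => ?_
    · exact (continuous_const.mul
        ((continuous_G t).comp (Continuous.prodMk_left (4 * (n : ℝ))))).continuousOn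
    · rw [Real.norm_of_nonneg (mul_nonneg zero_le_two (G_nonneg _ _ _))]
      refine (two_mul_G_image_le (mem_ball_zero_iff.1 hx).le t n).trans ?_
      gcongr
      exact Pi.single_mono 0 (by gcongr; exact G_le_inv_sqrt t x 0) n
  refine continuous_iff_continuousAt.2 fun x => ?_
  obtain ⟨n, hn⟩ := exists_abs_sub_four_mul_le x
  rw [← funext fun y => boundaryKernel_sub_four_mul t y n]
  exact ContinuousAt.comp (f := fun y => y - 4 * (n : ℝ))
    (hcont.continuousAt (Metric.isOpen_ball.mem_nhds (by simpa using by linarith)))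
    (by fun_prop)

lemma exists_boundaryKernel_le (T : ℝ) :
    ∃ C, 0 ≤ C ∧ ∀ s ≤ T, ∀ x, boundaryKernel s x ≤ C * (√s)⁻¹ := by
  have hS : 0 ≤ ∑' n : ℤ, 1 / (n : ℝ) ^ 2 := tsum_nonneg fun _ => by positivity
  refine ⟨2 + 2 * |T| * ∑' n : ℤ, 1 / (n : ℝ) ^ 2, by positivity, fun s hs x => ?_⟩
  rcases le_or_gt s 0 with hs0 | hs0
  · rw [boundaryKernel_of_nonpos hs0]; positivity
  obtain ⟨n, hn⟩ := exists_abs_sub_four_mul_le x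
  have hsqrt : √s ≤ |T| * (√s)⁻¹ := by
    rw [← div_eq_mul_inv, le_div_iff₀ (Real.sqrt_pos.2 hs0), Real.mul_self_sqrt hs0.le]
    exact hs.trans (le_abs_self T)
  calc boundaryKernel s x
      ≤ 2 * G s (x - 4 * n) 0 + 2 * √s * ∑' n : ℤ, 1 / (n : ℝ) ^ 2 :=
        boundaryKernel_sub_four_mul s x n ▸ boundaryKernel_le (hn.trans (by norm_num)) s
    _ ≤ 2 * (√s)⁻¹ + 2 * (|T| * (√s)⁻¹) * ∑' n : ℤ, 1 / (n : ℝ) ^ 2 := by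
        gcongr; exact G_le_inv_sqrt _ _ _
    _ = _ := by ring

lemma tendsto_boundaryKernel_zero (hx : ∀ n : ℤ, x ≠ 4 * n) :
    Tendsto (boundaryKernel · x) (𝓝 0) (𝓝 0) := by
  obtain ⟨n, hn⟩ := exists_abs_sub_four_mul_le x
  have hne : x - 4 * n ≠ 0 := sub_ne_zero.2 (hx n)
  have hle (s : ℝ) : boundaryKernel s x ≤
      2 * (√s / (x - 4 * n - 0) ^ 2) + 2 * √s * ∑' n : ℤ, 1 / (n : ℝ) ^ 2 := by
    rw [← boundaryKernel_sub_four_mul s x n]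
    refine (boundaryKernel_le (hn.trans (by norm_num)) s).trans ?_
    gcongr
    exact G_le_sqrt_div_sq hne s
  refine squeeze_zero (fun s => boundaryKernel_nonneg s x) hle ?_
  have : Continuous fun s : ℝ =>
      2 * (√s / (x - 4 * n - 0) ^ 2) + 2 * √s * ∑' n : ℤ, 1 / (n : ℝ) ^ 2 := by fun_prop
  simpa using this.tendsto 0

end Kernel

section Heat

variable {f : ℝ → ℝ} {s t h x : ℝ}

/-- The heat semigroup on the real line: `heat f t x` is the expectation of `f` at a Brownian
motion started at `x` and run for time `t`. It is `f x` for `t ≤ 0`. -/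
noncomputable def heat (f : ℝ → ℝ) (t x : ℝ) : ℝ := ∫ y, f y ∂gaussianReal x t.toNNReal

lemma heat_zero (f : ℝ → ℝ) (x : ℝ) : heat f 0 x = f x := by
  simp [heat]

lemma le_heat {m : ℝ} (hf : Integrable f (gaussianReal x t.toNNReal)) (hm : ∀ y, m ≤ f y) :
    m ≤ heat f t x := by
  simpa [heat] using integral_mono (integrable_const m) hf hm

lemma heat_one_sub (f : ℝ →ᵇ ℝ) (t x : ℝ) : heat (1 - f : ℝ →ᵇ ℝ) t x = 1 - heat f t x := by
  simp [heat, integral_sub (integrable_const 1) (f.integrable _)]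

lemma heat_eq_integral_add (f : ℝ → ℝ) (t x : ℝ) :
    heat f t x = ∫ z, f (x + z) ∂gaussianReal 0 t.toNNReal := by
  have hmap : gaussianReal x t.toNNReal =
      (gaussianReal 0 t.toNNReal).map (MeasurableEquiv.addLeft x) := by
    rw [MeasurableEquiv.coe_addLeft, gaussianReal_map_const_add, zero_add]
  rw [heat, hmap, integral_map_equiv]
  rfl

lemma heat_eq_integral_gaussianReal_zero_one (hf : Continuous f) (t x : ℝ) :
    heat f t x = ∫ z, f (x + √t * z) ∂gaussianReal 0 1 := by
  have hmap : gaussianReal 0 t.toNNReal = (gaussianReal 0 1).map fun z => √t * z := by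
    rw [gaussianReal_map_const_mul, mul_zero, mul_one]
    congr 1
    ext
    rcases le_total 0 t with ht | ht
    · simp [ht, Real.sq_sqrt ht]
    · simp [ht, Real.sqrt_eq_zero_of_nonpos ht]
  rw [heat_eq_integral_add, hmap, integral_map (by fun_prop) (by fun_prop)]

lemma continuous_heat (f : ℝ →ᵇ ℝ) : Continuous fun p : ℝ × ℝ => heat f p.1 p.2 := by
  simp only [heat_eq_integral_gaussianReal_zero_one f.continuous]
  refine continuous_of_dominated (fun p => ?_) (fun p => .of_forall fun z => f.norm_coe_le_norm _)
    (integrable_const ‖f‖) (.of_forall fun z => ?_)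
  · exact (f.continuous.comp (by fun_prop)).aestronglyMeasurable
  · exact f.continuous.comp (by fun_prop)

lemma heat_periodic {c : ℝ} (hf : Function.Periodic f c) (t : ℝ) :
    Function.Periodic (heat f t) c := fun x => by
  simp only [heat_eq_integral_add, add_right_comm x c, hf _]

lemma heat_heat (f : ℝ →ᵇ ℝ) (ht : 0 ≤ t) (hh : 0 ≤ h) (x : ℝ) :
    heat (heat f t) h x = heat f (t + h) x := by
  have hconv : gaussianReal x h.toNNReal ∗ gaussianReal 0 t.toNNReal =
      gaussianReal x (t + h).toNNReal := by
    rw [gaussianReal_conv_gaussianReal, add_zero, ← Real.toNNReal_add hh ht, add_comm h]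
  rw [heat, heat, ← hconv, integral_conv (f.integrable _)]
  exact integral_congr_ae (.of_forall fun y => heat_eq_integral_add f t y)

lemma heat_eq_integral_G (ht : 0 < t) (f : ℝ → ℝ) (x : ℝ) :
    heat f t x = ∫ y, G t x y * f y := by
  rw [heat, integral_gaussianReal_eq_integral_smul (Real.toNNReal_pos.2 ht).ne']
  simp only [← G_eq_gaussianPDFReal, smul_eq_mul, G_comm t x]

lemma integrable_G (t x : ℝ) : Integrable (G t x) := by
  have : G t x = gaussianPDFReal x t.toNNReal := funext fun y => by
    rw [G_comm, G_eq_gaussianPDFReal]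
  exact this ▸ integrable_gaussianPDFReal x t.toNNReal

/-- Complete the square in `y`. -/
lemma G_mul_G (hs : 0 < s) (hh : 0 < h) (x y c : ℝ) :
    G h x y * G s y c =
      G (s + h) x c * G (s * h / (s + h)) y ((s * x + h * c) / (s + h)) := by
  have hsqrt : √(2 * Real.pi * h) * √(2 * Real.pi * s) =
      √(2 * Real.pi * (s + h)) * √(2 * Real.pi * (s * h / (s + h))) := by
    rw [← Real.sqrt_mul (by positivity), ← Real.sqrt_mul (by positivity)]
    congr 1
    field_simp
  simp only [G, div_mul_div_comm, ← Real.exp_add, hsqrt]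
  congr 2
  field_simp
  ring

lemma heat_G (hs : 0 < s) (hh : 0 ≤ h) (c x : ℝ) :
    heat (G s · c) h x = G (s + h) x c := by
  rcases hh.eq_or_lt with rfl | hh
  · rw [heat_zero, add_zero]
  have hvar : 0 < s * h / (s + h) := by positivity
  simp only [heat_eq_integral_G hh, G_mul_G hs hh, integral_const_mul, G_eq_gaussianPDFReal
    (s * h / (s + h)), integral_gaussianPDFReal_eq_one _ (Real.toNNReal_pos.2 hvar).ne', mul_one]

lemma heat_boundaryKernel (hs : 0 < s) (hh : 0 ≤ h) (c x : ℝ) :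
    heat (fun y => boundaryKernel s (y - c)) h x = boundaryKernel (s + h) (x - c) := by
  have hterm (n : ℤ) (t y : ℝ) : G t (y - c) (4 * n) = G t y (c + 4 * n) := by
    rw [G, G, sub_sub]
  have hheat (n : ℤ) : ∫ y, 2 * G s (y - c) (4 * n) ∂gaussianReal x h.toNNReal =
      2 * G (s + h) (x - c) (4 * n) := by
    simp only [integral_const_mul, hterm]
    rw [← heat_G hs hh, heat]
  have hint (n : ℤ) :
      Integrable (fun y => 2 * G s (y - c) (4 * n)) (gaussianReal x h.toNNReal) := by
    refine .of_bound (C := 2 * (√s)⁻¹) (Continuous.aestronglyMeasurable ?_)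
      (.of_forall fun y => ?_)
    · exact continuous_const.mul
        ((continuous_G s).comp ((continuous_sub_right c).prodMk continuous_const))
    · rw [Real.norm_of_nonneg (mul_nonneg zero_le_two (G_nonneg _ _ _))]
      gcongr
      exact G_le_inv_sqrt _ _ _
  have hsum : Summable fun n : ℤ =>
      ∫ y, ‖2 * G s (y - c) (4 * n)‖ ∂gaussianReal x h.toNNReal := by
    simp only [Real.norm_of_nonneg (mul_nonneg zero_le_two (G_nonneg _ _ _)), hheat]
    exact summable_two_mul_G_image _ _
  unfold heat boundaryKernel
  rw [← (hasSum_integral_of_summable_integral_norm hint hsum).tsum_eq]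
  exact tsum_congr hheat

end Heat

section Potential

variable {t h : ℝ}

/-- The heat potential of a source of strength `α` at the point `c`. -/
noncomputable def potential (α : ℝ → ℝ) (c t x : ℝ) : ℝ :=
  ∫ s in (0 : ℝ)..t, boundaryKernel s (x - c) * α (t - s)

lemma potential_zero (α : ℝ → ℝ) (c x : ℝ) : potential α c 0 x = 0 :=
  intervalIntegral.integral_same

lemma potential_periodic (α : ℝ → ℝ) (c t : ℝ) :
    Function.Periodic (potential α c t) 4 := fun x => by
  simp only [potential, add_sub_right_comm, (boundaryKernel_periodic _) _]

lemma intervalIntegrable_inv_sqrt (a b : ℝ) :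
    IntervalIntegrable (fun s : ℝ => (√s)⁻¹) volume a b := by
  refine (intervalIntegral.intervalIntegrable_rpow' (r := -(1 / 2)) (by norm_num)).mono_fun
    (by fun_prop) (.of_forall fun s => ?_)
  rcases le_total s 0 with hs | hs
  · simp [Real.sqrt_eq_zero_of_nonpos hs]
  · simp [Real.rpow_neg hs, Real.sqrt_eq_rpow]

lemma norm_boundaryKernel_mul_le {C s : ℝ} (hC : ∀ x, boundaryKernel s x ≤ C * (√s)⁻¹)
    (α : ℝ →ᵇ ℝ) (x τ : ℝ) : ‖boundaryKernel s x * α τ‖ ≤ C * (√s)⁻¹ * ‖α‖ := by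
  rw [norm_mul, Real.norm_of_nonneg (boundaryKernel_nonneg _ _)]
  exact mul_le_mul (hC x) (α.norm_coe_le_norm τ) (norm_nonneg _)
    ((boundaryKernel_nonneg s x).trans (hC x))

lemma measurable_boundaryKernel_mul (α : ℝ →ᵇ ℝ) (t y : ℝ) :
    Measurable fun s => boundaryKernel s y * α (t - s) :=
  (measurable_boundaryKernel.comp (measurable_id.prodMk measurable_const)).mul
    (α.continuous.measurable.comp (measurable_const.sub measurable_id))

lemma intervalIntegrable_boundaryKernel_mul (α : ℝ →ᵇ ℝ) (t y a b : ℝ) :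
    IntervalIntegrable (fun s => boundaryKernel s y * α (t - s)) volume a b := by
  obtain ⟨C, -, hC⟩ := exists_boundaryKernel_le (max a b)
  refine (((intervalIntegrable_inv_sqrt a b).const_mul C).mul_const ‖α‖).mono_fun'
    (measurable_boundaryKernel_mul α t y).aestronglyMeasurable ?_
  filter_upwards [ae_restrict_mem measurableSet_uIoc] with s hs
  exact norm_boundaryKernel_mul_le (hC s hs.2) α y (t - s)

lemma continuous_potential (α : ℝ →ᵇ ℝ) (c : ℝ) :
    Continuous fun p : ℝ × ℝ => potential α c p.1 p.2 := by
  refine continuous_iff_continuousAt.2 fun p => ?_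
  obtain ⟨C, -, hC⟩ := exists_boundaryKernel_le (|p.1| + 1)
  have hp := abs_nonneg p.1
  have hprim := intervalIntegral.continuousAt_parametric_primitive_of_dominated (μ := volume)
    (F := fun (q : ℝ × ℝ) s => boundaryKernel s (q.2 - c) * α (q.1 - s)) (x₀ := p)
    (a₀ := 0) (b₀ := p.1)
    (fun s => C * (√s)⁻¹ * ‖α‖) (-(|p.1| + 1)) (|p.1| + 1)
    (fun q => (measurable_boundaryKernel_mul α q.1 (q.2 - c)).aestronglyMeasurable)
    (.of_forall fun q => ?_) (((intervalIntegrable_inv_sqrt _ _).const_mul C).mul_const ‖α‖)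
    (.of_forall fun s => ?_) ?_ ?_ Real.volume_singleton
  · exact hprim.comp (f := fun q : ℝ × ℝ => (q, q.1)) (by fun_prop)
  · filter_upwards [ae_restrict_mem measurableSet_uIoc] with s hs
    rw [uIoc_of_le (by linarith)] at hs
    exact norm_boundaryKernel_mul_le (hC s hs.2) α _ _
  · exact (((continuous_boundaryKernel s).comp (by fun_prop)).mul
      (α.continuous.comp (by fun_prop))).continuousAt
  · constructor <;> linarith
  · constructor <;> linarith [neg_abs_le p.1, le_abs_self p.1]

/-- The part of the source emitted before time `t` evolves by the heat semigroup. -/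
lemma integral_boundaryKernel_add_mul (α : ℝ →ᵇ ℝ) (c : ℝ) (ht : 0 ≤ t) (hh : 0 ≤ h) (x : ℝ) :
    ∫ s in (0 : ℝ)..t, boundaryKernel (s + h) (x - c) * α (t - s) =
      heat (potential α c t) h x := by
  obtain ⟨C, -, hC⟩ := exists_boundaryKernel_le t
  have hint : Integrable
      (Function.uncurry fun s y => boundaryKernel s (y - c) * α (t - s))
      ((volume.restrict (uIoc 0 t)).prod (gaussianReal x h.toNNReal)) := by
    have hbound := ((intervalIntegrable_inv_sqrt 0 t).const_mul C).mul_const ‖α‖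
    refine (hbound.def'.comp_fst (gaussianReal x h.toNNReal)).mono' ?_ ?_
    · exact ((measurable_boundaryKernel.comp (measurable_fst.prodMk
        (measurable_snd.sub_const c))).mul (α.continuous.measurable.comp
        (measurable_const.sub measurable_fst))).aestronglyMeasurable
    · have hmem : ∀ᵐ p ∂(volume.restrict (uIoc 0 t)).prod (gaussianReal x h.toNNReal),
          p.1 ∈ uIoc 0 t :=
        Measure.quasiMeasurePreserving_fst.ae (ae_restrict_mem measurableSet_uIoc)
      filter_upwards [hmem] with p hp
      rw [uIoc_of_le ht] at hp
      exact norm_boundaryKernel_mul_le (hC _ hp.2) α _ _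
  calc ∫ s in (0 : ℝ)..t, boundaryKernel (s + h) (x - c) * α (t - s)
      = ∫ s in (0 : ℝ)..t, ∫ y, boundaryKernel s (y - c) * α (t - s)
          ∂gaussianReal x h.toNNReal := by
        refine intervalIntegral.integral_congr_Ioo_of_le ht fun s hs => ?_
        simp only [integral_mul_const]
        rw [← heat_boundaryKernel hs.1 hh, heat]
    _ = heat (potential α c t) h x := intervalIntegral_integral_swap hint

lemma potential_add (α : ℝ →ᵇ ℝ) (c : ℝ) (ht : 0 ≤ t) (hh : 0 ≤ h) (x : ℝ) :
    potential α c (t + h) x = heat (potential α c t) h x +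
      ∫ s in (0 : ℝ)..h, boundaryKernel s (x - c) * α (t + h - s) := by
  have hint := intervalIntegrable_boundaryKernel_mul α (t + h) (x - c)
  have hshift : ∫ s in h..t + h, boundaryKernel s (x - c) * α (t + h - s) =
      heat (potential α c t) h x := by
    rw [← integral_boundaryKernel_add_mul α c ht hh]
    simpa using (intervalIntegral.integral_comp_add_right (a := 0) (b := t)
      (fun s => boundaryKernel s (x - c) * α (t + h - s)) h).symm
  rw [← hshift, add_comm (∫ s in h..t + h, _), potential,
    intervalIntegral.integral_add_adjacent_intervals (hint 0 h) (hint h (t + h))]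

lemma potential_sub (α β : ℝ →ᵇ ℝ) (c t x : ℝ) :
    potential (α - β : ℝ →ᵇ ℝ) c t x = potential α c t x - potential β c t x := by
  simp only [potential, BoundedContinuousFunction.coe_sub, Pi.sub_apply, mul_sub]
  exact intervalIntegral.integral_sub (intervalIntegrable_boundaryKernel_mul α t _ 0 t)
    (intervalIntegrable_boundaryKernel_mul β t _ 0 t)

lemma integral_inv_sqrt_mul_exp_neg {μ : ℝ} (hμ : 0 < μ) :
    ∫ s in Ioi (0 : ℝ), (√s)⁻¹ * Real.exp (-(μ * s)) = √(Real.pi / μ) := by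
  have hgamma := Real.integral_rpow_mul_exp_neg_mul_Ioi one_half_pos hμ
  rw [Real.Gamma_one_half_eq, ← Real.sqrt_eq_rpow, ← Real.sqrt_mul (by positivity),
    one_div_mul_eq_div] at hgamma
  rw [← hgamma]
  refine setIntegral_congr_fun measurableSet_Ioi fun s hs => ?_
  rw [Real.sqrt_eq_rpow, ← Real.rpow_neg (le_of_lt hs)]
  norm_num

lemma integral_inv_sqrt_mul_exp_neg_le {μ : ℝ} (hμ : 0 < μ) (ht : 0 ≤ t) :
    ∫ s in (0 : ℝ)..t, (√s)⁻¹ * Real.exp (-(μ * s)) ≤ √(Real.pi / μ) := by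
  have hval := integral_inv_sqrt_mul_exp_neg hμ
  have hint : IntegrableOn (fun s => (√s)⁻¹ * Real.exp (-(μ * s))) (Ioi 0) :=
    .of_integral_ne_zero (hval ▸ (Real.sqrt_pos.2 (by positivity)).ne')
  rw [← hval, intervalIntegral.integral_of_le ht]
  exact setIntegral_mono_set hint (.of_forall fun s => by positivity)
    Ioc_subset_Ioi_self.eventuallyLE

lemma exists_abs_potential_le (T : ℝ) :
    ∃ C, 0 ≤ C ∧ ∀ {μ D : ℝ} {α : ℝ →ᵇ ℝ} {t : ℝ}, 0 < μ → t ∈ Icc 0 T →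
      (∀ τ ∈ Icc 0 T, |α τ| ≤ D * Real.exp (μ * τ)) →
      ∀ c x, |potential α c t x| ≤ C / √μ * (D * Real.exp (μ * t)) := by
  obtain ⟨C, hC0, hC⟩ := exists_boundaryKernel_le T
  refine ⟨C * √Real.pi, by positivity, fun {μ D α t} hμ ht hα c x => ?_⟩
  have hD : 0 ≤ D * Real.exp (μ * t) := (abs_nonneg _).trans (hα t ht)
  have hpt : ∀ s ∈ Icc 0 t, |boundaryKernel s (x - c) * α (t - s)| ≤
      C * (D * Real.exp (μ * t)) * ((√s)⁻¹ * Real.exp (-(μ * s))) := fun s hs =>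
    calc |boundaryKernel s (x - c) * α (t - s)|
        ≤ C * (√s)⁻¹ * (D * Real.exp (μ * (t - s))) := by
          rw [abs_mul, abs_of_nonneg (boundaryKernel_nonneg _ _)]
          exact mul_le_mul (hC s (hs.2.trans ht.2) _)
            (hα _ ⟨sub_nonneg.2 hs.2, (sub_le_self t hs.1).trans ht.2⟩)
            (abs_nonneg _) (by positivity)
      _ = _ := by rw [mul_sub, sub_eq_add_neg, Real.exp_add]; ring
  calc |potential α c t x|
      ≤ ∫ s in (0 : ℝ)..t, |boundaryKernel s (x - c) * α (t - s)| :=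
        intervalIntegral.abs_integral_le_integral_abs ht.1
    _ ≤ ∫ s in (0 : ℝ)..t, C * (D * Real.exp (μ * t)) * ((√s)⁻¹ * Real.exp (-(μ * s))) :=
        intervalIntegral.integral_mono_on ht.1
          (intervalIntegrable_boundaryKernel_mul α t (x - c) 0 t).abs
          (((intervalIntegrable_inv_sqrt 0 t).mul_continuousOn (by fun_prop)).const_mul _) hpt
    _ ≤ C * (D * Real.exp (μ * t)) * √(Real.pi / μ) := by
        rw [intervalIntegral.integral_const_mul]
        gcongr
        exact integral_inv_sqrt_mul_exp_neg_le hμ ht.1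
    _ = C * √Real.pi / √μ * (D * Real.exp (μ * t)) := by
        rw [Real.sqrt_div Real.pi_pos.le]; ring

end Potential

section MinimumPrinciple

variable {φ α β : ℝ →ᵇ ℝ} {c d t h T x : ℝ}

lemma integrable_of_continuous_of_periodic {f : ℝ → ℝ} (hf : Continuous f) {c : ℝ} (hc : c ≠ 0)
    (hper : Function.Periodic f c) (μ : Measure ℝ) [IsFiniteMeasure μ] : Integrable f μ := by
  obtain ⟨C, hC⟩ := (hper.isBounded_of_continuous hc hf).exists_norm_le
  exact .of_bound hf.aestronglyMeasurable C (.of_forall fun x => hC _ ⟨x, rfl⟩)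

lemma exists_forall_le_of_periodic {F : ℝ → ℝ → ℝ} (hF : Continuous fun p : ℝ × ℝ => F p.1 p.2)
    {c : ℝ} (hc : 0 < c) (hper : ∀ t, Function.Periodic (F t) c) (hT : 0 ≤ T) :
    ∃ t₀ ∈ Icc 0 T, ∃ x₀, ∀ t ∈ Icc 0 T, ∀ x, F t₀ x₀ ≤ F t x := by
  obtain ⟨⟨t₀, x₀⟩, hp₀, hmin⟩ := (isCompact_Icc.prod isCompact_Icc).exists_isMinOn
    (s := Icc 0 T ×ˢ Icc 0 c) ⟨(0, 0), ⟨le_rfl, hT⟩, le_rfl, hc.le⟩ hF.continuousOn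
  refine ⟨t₀, hp₀.1, x₀, fun t ht x => ?_⟩
  obtain ⟨y, hy, hxy⟩ := (hper t).exists_mem_Ico₀ hc x
  rw [hxy]
  exact hmin (a := (t, y)) ⟨ht, Ico_subset_Icc_self hy⟩

/-- The heat field on the real line with initial datum `φ`, a source of strength `α` at `c` and a
sink of strength `β` at `d`. -/
noncomputable def field (φ α β : ℝ → ℝ) (c d t x : ℝ) : ℝ :=
  heat φ t x + potential α c t x - potential β d t x

lemma continuous_field (φ α β : ℝ →ᵇ ℝ) (c d : ℝ) :
    Continuous fun p : ℝ × ℝ => field φ α β c d p.1 p.2 :=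
  ((continuous_heat φ).add (continuous_potential α c)).sub (continuous_potential β d)

lemma field_periodic (hφ : Function.Periodic φ 4) (α β : ℝ → ℝ) (c d t : ℝ) :
    Function.Periodic (field φ α β c d t) 4 :=
  ((heat_periodic hφ t).add (potential_periodic α c t)).sub (potential_periodic β d t)

lemma field_zero (φ α β : ℝ → ℝ) (c d x : ℝ) : field φ α β c d 0 x = φ x := by
  simp [field, heat_zero, potential_zero]

lemma one_sub_field (φ α β : ℝ →ᵇ ℝ) (c d t x : ℝ) :
    1 - field φ α β c d t x = field (1 - φ : ℝ →ᵇ ℝ) β α d c t x := by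
  rw [field, field, heat_one_sub]
  ring

lemma field_add (hφ : Function.Periodic φ 4) (ht : 0 ≤ t) (hh : 0 ≤ h) (α β : ℝ →ᵇ ℝ)
    (c d x : ℝ) :
    field φ α β c d (t + h) x = heat (field φ α β c d t) h x
      + (∫ s in (0 : ℝ)..h, boundaryKernel s (x - c) * α (t + h - s))
      - ∫ s in (0 : ℝ)..h, boundaryKernel s (x - d) * β (t + h - s) := by
  have hheat : Integrable (heat φ t) (gaussianReal x h.toNNReal) :=
    integrable_of_continuous_of_periodic ((continuous_heat φ).comp (.prodMk_right t))
      four_ne_zero (heat_periodic hφ t) _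
  have hpot (γ : ℝ →ᵇ ℝ) (e : ℝ) : Integrable (potential γ e t) (gaussianReal x h.toNNReal) :=
    integrable_of_continuous_of_periodic ((continuous_potential γ e).comp (.prodMk_right t))
      four_ne_zero (potential_periodic γ e t) _
  have hsplit : heat (field φ α β c d t) h x =
      heat (heat φ t) h x + heat (potential α c t) h x - heat (potential β d t) h x := by
    calc heat (field φ α β c d t) h x
        = ∫ y, heat φ t y + potential α c t y ∂gaussianReal x h.toNNReal
            - heat (potential β d t) h x := integral_sub (hheat.add (hpot α c)) (hpot β d)
      _ = _ := by rw [integral_add hheat (hpot α c)]; rfl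
  rw [hsplit, heat_heat φ ht hh, field, potential_add α c ht hh, potential_add β d ht hh]
  ring

lemma eventually_boundaryKernel_mul_le {y ε : ℝ}
    (hβ : (∃ n : ℤ, y = 4 * n) → ∀ᶠ s in 𝓝[>] 0, β (t - s) = 0) (hε : 0 < ε) :
    ∀ᶠ s in 𝓝[>] 0, boundaryKernel s y * β (t - s) ≤ ε := by
  by_cases hy : ∃ n : ℤ, y = 4 * n
  · filter_upwards [hβ hy] with s hs
    simpa [hs] using hε.le
  · have hβcont : Continuous fun s => β (t - s) := by fun_prop
    have hlim := (tendsto_boundaryKernel_zero (not_exists.1 hy)).mul (hβcont.tendsto 0)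
    rw [zero_mul] at hlim
    exact nhdsWithin_le_nhds ((hlim.eventually (gt_mem_nhds hε)).mono fun s hs => hs.le)

lemma eventually_sink_le (hφ : Function.Periodic φ 4)
    (hβ : ∀ t ∈ Icc 0 T, field φ α β c d t d < 0 → β t = 0) (ht : t ∈ Ioc 0 T)
    (hneg : field φ α β c d t x < 0) {ε : ℝ} (hε : 0 < ε) :
    ∀ᶠ s in 𝓝[>] 0, boundaryKernel s (x - d) * β (t - s) ≤ ε := by
  refine eventually_boundaryKernel_mul_le ?_ hε
  rintro ⟨n, hn⟩
  have hd : field φ α β c d t d < 0 := by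
    rw [← (field_periodic hφ α β c d t).int_mul n d]
    rwa [show x = d + n * 4 by linarith] at hneg
  have hcont : Continuous fun s => field φ α β c d (t - s) d :=
    (continuous_field φ α β c d).comp (f := fun s => (t - s, d)) (by fun_prop)
  have hlt : ∀ᶠ s in 𝓝[>] 0, field φ α β c d (t - s) d < 0 :=
    nhdsWithin_le_nhds ((hcont.tendsto 0).eventually_lt_const (by simpa using hd))
  filter_upwards [hlt, Ioo_mem_nhdsGT ht.1] with s hs hst
  exact hβ _ ⟨by linarith [hst.2], by linarith [hst.1, ht.2]⟩ hs

lemma le_field_add (hφ : Function.Periodic φ 4) (ht : 0 ≤ t) (hh : 0 ≤ h) (hα0 : ∀ τ, 0 ≤ α τ)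
    {m ε : ℝ} (hm : ∀ y, m ≤ field φ α β c d t y)
    (hsink : ∀ s ∈ Ioo 0 h, boundaryKernel s (x - d) * β (t + h - s) ≤ ε) :
    m - ε * h ≤ field φ α β c d (t + h) x := by
  have hheat : m ≤ heat (field φ α β c d t) h x :=
    le_heat (integrable_of_continuous_of_periodic ((continuous_field φ α β c d).comp
      (.prodMk_right t)) four_ne_zero (field_periodic hφ α β c d t) _) hm
  have hsource : 0 ≤ ∫ s in (0 : ℝ)..h, boundaryKernel s (x - c) * α (t + h - s) :=
    intervalIntegral.integral_nonneg hh fun s _ => mul_nonneg (boundaryKernel_nonneg _ _) (hα0 _)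
  have hsink : ∫ s in (0 : ℝ)..h, boundaryKernel s (x - d) * β (t + h - s) ≤ ε * h := by
    simpa [mul_comm] using intervalIntegral.integral_mono_on_of_le_Ioo hh
      (intervalIntegrable_boundaryKernel_mul β (t + h) (x - d) 0 h) intervalIntegrable_const hsink
  rw [field_add hφ ht hh]
  linarith

/-- At a negative minimum of `field + η t` in space-time, with `η > 0`, restarting the evolution a
short time `h` earlier raises the field by at least `η h`, while the sink, which is off wherever
the field is negative, removes at most `η h / 2`. -/
theorem field_nonneg (hφ : Function.Periodic φ 4) (hφ0 : ∀ x, 0 ≤ φ x) (hα0 : ∀ τ, 0 ≤ α τ)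
    (hβ : ∀ t ∈ Icc 0 T, field φ α β c d t d < 0 → β t = 0) (ht : t ∈ Icc 0 T) (x : ℝ) :
    0 ≤ field φ α β c d t x := by
  set F := field φ α β c d with hF
  have hpos {s y : ℝ} (hs : 0 ≤ s) (hsy : F s y < 0) : 0 < s := by
    refine hs.lt_of_ne fun h0 => hsy.not_ge ?_
    rw [← h0, hF, field_zero]
    exact hφ0 y
  by_contra! hneg
  have hT : 0 < T := (hpos ht.1 hneg).trans_le ht.2
  obtain ⟨η, hη, hηT⟩ : ∃ η > 0, F t x + η * T < 0 :=
    ⟨-F t x / (2 * T), by have := neg_pos.2 hneg; positivity, by field_simp; linarith⟩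
  obtain ⟨t₀, ht₀, x₀, hmin⟩ := exists_forall_le_of_periodic (F := fun t x => F t x + η * t)
    ((continuous_field φ α β c d).add (by fun_prop)) four_pos
    (fun t x => by simp only [hF, field_periodic hφ α β c d t x]) hT.le
  have hneg₀ : F t₀ x₀ < 0 := by nlinarith [hmin t ht x, ht.2, ht₀.1]
  have ht₀pos : 0 < t₀ := hpos ht₀.1 hneg₀
  obtain ⟨h, hh, hsub⟩ := mem_nhdsGT_iff_exists_Ioc_subset.1
    ((eventually_sink_le hφ hβ ⟨ht₀pos, ht₀.2⟩ hneg₀ (half_pos hη)).and (Ioo_mem_nhdsGT ht₀pos))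
  have hh : 0 < h := hh
  have hht : h < t₀ := (hsub ⟨hh, le_rfl⟩).2.2
  have hbefore (y : ℝ) : F t₀ x₀ + η * h ≤ F (t₀ - h) y := by
    linarith [hmin (t₀ - h) ⟨by linarith, by linarith [ht₀.2]⟩ y]
  have hafter := le_field_add (x := x₀) (ε := η / 2) hφ (sub_nonneg.2 hht.le) hh.le hα0 hbefore
    fun s hs => by
      rw [sub_add_cancel]
      exact (hsub (Ioo_subset_Ioc_self hs)).1
  rw [sub_add_cancel] at hafter
  nlinarith [mul_pos hη hh]

end MinimumPrinciple

section Reflection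

variable {E : Type*} [NormedAddCommGroup E] {f : ℝ → E} {t : ℝ}

lemma integrable_add_reflection (hf : Integrable f) (n : ℤ) :
    Integrable fun r => f (r + 4 * n) + f (2 - r + 4 * n) :=
  (hf.comp_add_right _).add ((hf.comp_add_right _).comp_sub_left 2)

variable [NormedSpace ℝ E]

lemma integral_add_reflection (hf : Integrable f) (n : ℤ) :
    ∫ r in (-1 : ℝ)..1, (f (r + 4 * n) + f (2 - r + 4 * n)) =
      ∫ y in Ioc (-1 + n • (4 : ℝ)) (-1 + (n + 1) • (4 : ℝ)), f y := by
  have hshift : Integrable fun r => f (r + 4 * n) := hf.comp_add_right _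
  rw [intervalIntegral.integral_add hshift.intervalIntegrable
      (hshift.comp_sub_left 2).intervalIntegrable,
    intervalIntegral.integral_comp_sub_left (fun r => f (r + 4 * n)) 2,
    intervalIntegral.integral_comp_add_right f, intervalIntegral.integral_comp_add_right f,
    show (2 : ℝ) - 1 = 1 by norm_num,
    intervalIntegral.integral_add_adjacent_intervals hf.intervalIntegrable hf.intervalIntegrable,
    intervalIntegral.integral_of_le (by linarith)]
  simp only [zsmul_eq_mul, Int.cast_add, Int.cast_one]
  congr 3 <;> ring

lemma hasSum_integral_add_reflection (hf : Integrable f) :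
    HasSum (fun n : ℤ => ∫ r in (-1 : ℝ)..1, (f (r + 4 * n) + f (2 - r + 4 * n)))
      (∫ y, f y) := by
  simp only [integral_add_reflection hf]
  rw [← setIntegral_univ, ← iUnion_Ioc_add_zsmul (four_pos : (0 : ℝ) < 4) (-1)]
  exact hasSum_integral_iUnion (fun _ => measurableSet_Ioc)
    (pairwise_disjoint_Ioc_add_zsmul (-1) (4 : ℝ)) hf.integrableOn

lemma integral_tsum_add_reflection (hf : Integrable f) :
    ∫ r in (-1 : ℝ)..1, ∑' n : ℤ, (f (r + 4 * n) + f (2 - r + 4 * n)) = ∫ y, f y := by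
  have hle : (-1 : ℝ) ≤ 1 := by norm_num
  refine HasSum.unique ?_ (hasSum_integral_add_reflection hf)
  simp only [intervalIntegral.integral_of_le hle]
  refine hasSum_integral_of_summable_integral_norm
    (fun n => (integrable_add_reflection hf n).integrableOn) ?_
  refine .of_nonneg_of_le (fun n => integral_nonneg fun r => norm_nonneg _) (fun n => ?_)
    (hasSum_integral_add_reflection hf.norm).summable
  rw [intervalIntegral.integral_of_le hle]
  exact integral_mono (integrable_add_reflection hf n).norm.integrableOn
    (integrable_add_reflection hf.norm n).integrableOn fun r => norm_add_le _ _

lemma P_eq_tsum_of_mem_Ioc (t x : ℝ) {r : ℝ} (hr : r ∈ Ioc (-1 : ℝ) 1) :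
    P t x r = ∑' n : ℤ, (G t x (r + 4 * n) + G t x (2 - r + 4 * n)) := by
  rcases hr.2.eq_or_lt with rfl | hr1
  · rw [P, if_pos (Or.inl rfl)]
    norm_num [two_mul]
  · exact if_neg (by rintro (rfl | rfl) <;> simp_all)

lemma integral_P_mul_eq_heat {φ : ℝ →ᵇ ℝ} (hper : Function.Periodic φ 4)
    (hrefl : ∀ y, φ (2 - y) = φ y) (ht : 0 < t) (x : ℝ) :
    ∫ r in (-1 : ℝ)..1, P t x r * φ r = heat φ t x := by
  have hint : Integrable fun y => G t x y * φ y :=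
    (integrable_G t x).mul_bdd (c := ‖φ‖) φ.continuous.aestronglyMeasurable
      (.of_forall φ.norm_coe_le_norm)
  have hshift (y : ℝ) (n : ℤ) : φ (y + 4 * n) = φ y := by rw [mul_comm]; exact hper.int_mul n y
  rw [heat_eq_integral_G ht, ← integral_tsum_add_reflection hint,
    intervalIntegral.integral_of_le (by norm_num), intervalIntegral.integral_of_le (by norm_num)]
  refine setIntegral_congr_fun measurableSet_Ioc fun r hr => ?_
  simp only [P_eq_tsum_of_mem_Ioc t x hr, hshift, hrefl, ← add_mul, tsum_mul_right]

/-- The triangle wave of period `4` equal to the identity on `[-1, 1]`: it folds the real line onto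
`[-1, 1]` along the reflections in `±1`. -/
noncomputable def triangleWave : C(ℝ, Icc (-1 : ℝ) 1) where
  toFun y := ⟨2 / Real.pi * Real.arcsin (Real.sin (Real.pi / 2 * y)), by
    have h₁ := Real.neg_pi_div_two_le_arcsin (Real.sin (Real.pi / 2 * y))
    have h₂ := Real.arcsin_le_pi_div_two (Real.sin (Real.pi / 2 * y))
    rw [div_mul_eq_mul_div, mem_Icc, le_div_iff₀ Real.pi_pos, div_le_iff₀ Real.pi_pos]
    constructor <;> linarith⟩

lemma triangleWave_periodic : Function.Periodic triangleWave 4 := fun y => Subtype.ext <| by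
  change 2 / Real.pi * Real.arcsin (Real.sin (Real.pi / 2 * (y + 4))) = _
  rw [show Real.pi / 2 * (y + 4) = Real.pi / 2 * y + 2 * Real.pi by ring, Real.sin_add_two_pi]
  rfl

lemma triangleWave_two_sub (y : ℝ) : triangleWave (2 - y) = triangleWave y := Subtype.ext <| by
  change 2 / Real.pi * Real.arcsin (Real.sin (Real.pi / 2 * (2 - y))) = _
  rw [show Real.pi / 2 * (2 - y) = Real.pi - Real.pi / 2 * y by ring, Real.sin_pi_sub]
  rfl

lemma triangleWave_of_mem {y : ℝ} (hy : y ∈ Icc (-1 : ℝ) 1) : triangleWave y = ⟨y, hy⟩ :=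
  Subtype.ext <| by
    have hpi := Real.pi_pos
    change 2 / Real.pi * Real.arcsin (Real.sin (Real.pi / 2 * y)) = y
    rw [Real.arcsin_sin (by nlinarith [hy.1]) (by nlinarith [hy.2])]
    field_simp

/-- The extension of a function on `[-1, 1]` to the real line by reflections in `±1`. -/
noncomputable def reflectExtend (ρ : C(Icc (-1 : ℝ) 1, ℝ)) : ℝ →ᵇ ℝ :=
  (BoundedContinuousFunction.mkOfCompact ρ).compContinuous triangleWave

lemma reflectExtend_apply (ρ : C(Icc (-1 : ℝ) 1, ℝ)) (y : ℝ) :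
    reflectExtend ρ y = ρ (triangleWave y) := rfl

lemma reflectExtend_periodic (ρ : C(Icc (-1 : ℝ) 1, ℝ)) : Function.Periodic (reflectExtend ρ) 4 :=
  triangleWave_periodic.comp ρ

lemma integral_P_mul_eq_heat_reflectExtend {ρ₀ : ℝ → ℝ} (hρ₀ : ContinuousOn ρ₀ (Icc (-1) 1))
    (ht : 0 < t) (x : ℝ) :
    ∫ r in (-1 : ℝ)..1, P t x r * ρ₀ r = heat (reflectExtend ⟨_, hρ₀.domRestrict⟩) t x := by
  rw [← integral_P_mul_eq_heat (reflectExtend_periodic _)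
    (fun y => by simp only [reflectExtend_apply, triangleWave_two_sub]) ht]
  refine intervalIntegral.integral_congr fun r hr => ?_
  rw [uIcc_of_le (by norm_num)] at hr
  simp [reflectExtend_apply, triangleWave_of_mem hr]

end Reflection

section FixedPoint

lemma existsUnique_fixedPoint_of_weighted {X E : Type*} [TopologicalSpace X] [CompactSpace X]
    [NormedAddCommGroup E] [NormedSpace ℝ E] [CompleteSpace E] {Φ : C(X, E) → C(X, E)}
    {ω : C(X, ℝ)} (hω : ∀ x, 0 < ω x) {q : ℝ≥0} (hq : q < 1)
    (hΦ : ∀ (u v : C(X, E)) (D : ℝ), (∀ x, ‖u x - v x‖ ≤ D * ω x) →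
      ∀ x, ‖Φ u x - Φ v x‖ ≤ q * (D * ω x)) :
    ∃! u, Φ u = u := by
  let ωinv : C(X, ℝ) := ⟨fun x => (ω x)⁻¹, ω.continuous.inv₀ fun x => (hω x).ne'⟩
  have hinv (w : C(X, E)) : ω • ωinv • w = w :=
    ContinuousMap.ext fun x => smul_inv_smul₀ (hω x).ne' (w x)
  have hΨ : ContractingWith q fun w => ωinv • Φ (ω • w) := by
    refine ⟨hq, .of_dist_le_mul fun w z => (ContinuousMap.dist_le (by positivity)).2 fun x => ?_⟩
    have hwz (y : X) : ‖(ω • w) y - (ω • z) y‖ ≤ dist w z * ω y :=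
      calc ‖ω y • w y - ω y • z y‖ = dist (w y) (z y) * ω y := by
            rw [← smul_sub, norm_smul, Real.norm_of_nonneg (hω y).le, dist_eq_norm, mul_comm]
        _ ≤ dist w z * ω y := by
            gcongr
            exacts [(hω y).le, ContinuousMap.dist_apply_le_dist y]
    calc dist ((ω x)⁻¹ • Φ (ω • w) x) ((ω x)⁻¹ • Φ (ω • z) x)
        = (ω x)⁻¹ * ‖Φ (ω • w) x - Φ (ω • z) x‖ := by
          rw [dist_eq_norm, ← smul_sub, norm_smul, norm_inv, Real.norm_of_nonneg (hω x).le]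
      _ ≤ (ω x)⁻¹ * (q * (dist w z * ω x)) := by
          gcongr
          exacts [inv_nonneg.2 (hω x).le, hΦ _ _ _ hwz x]
      _ = q * dist w z := by field_simp [(hω x).ne']
  refine ⟨ω • hΨ.fixedPoint, ?_, fun u hu => ?_⟩
  · have hfix : ωinv • Φ (ω • hΨ.fixedPoint) = hΨ.fixedPoint := hΨ.fixedPoint_isFixedPt
    simpa only [hinv] using congrArg (ω • ·) hfix
  · have hfix : Function.IsFixedPt (fun w => ωinv • Φ (ω • w)) (ωinv • u) :=
      congrArg (ωinv • ·) ((congrArg Φ (hinv u)).trans hu)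
    rw [← hΨ.fixedPoint_unique hfix, hinv]

end FixedPoint

section BoundaryMap

variable {T t τ : ℝ} (φ : ℝ →ᵇ ℝ) (f g : C(Icc (0 : ℝ) 1, ℝ)) (hT : 0 ≤ T)
  (u : C(Icc 0 T, ℝ × ℝ))

/-- The flux `f ∘ w` produced by a trajectory `w`, with the values of `w` projected to `[0, 1]` and
its time variable projected to `[0, T]`. -/
noncomputable def clampedFlux (w : C(Icc 0 T, ℝ)) : ℝ →ᵇ ℝ :=
  (BoundedContinuousFunction.mkOfCompact
    ((f.comp ⟨projIcc 0 1 zero_le_one, continuous_projIcc⟩).comp w)).compContinuous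
      ⟨projIcc 0 T hT, continuous_projIcc⟩

variable {f g} {w z : C(Icc 0 T, ℝ)}

lemma clampedFlux_apply (w : C(Icc 0 T, ℝ)) (τ : ℝ) :
    clampedFlux f hT w τ = f (projIcc 0 1 zero_le_one (w (projIcc 0 T hT τ))) := rfl

lemma clampedFlux_of_mem (hτ : τ ∈ Icc 0 T) (hw : w ⟨τ, hτ⟩ ∈ Icc (0 : ℝ) 1) :
    clampedFlux f hT w τ = f ⟨w ⟨τ, hτ⟩, hw⟩ := by
  rw [clampedFlux_apply, projIcc_of_mem hT hτ, projIcc_of_mem _ hw]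

lemma clampedFlux_nonneg (hf : ∀ a, 0 ≤ f a) (w : C(Icc 0 T, ℝ)) (τ : ℝ) :
    0 ≤ clampedFlux f hT w τ := hf _

lemma clampedFlux_eq_zero_of_one_le (hf : f 1 = 0) (hτ : τ ∈ Icc 0 T) (hw : 1 ≤ w ⟨τ, hτ⟩) :
    clampedFlux f hT w τ = 0 := by
  rwa [clampedFlux_apply, projIcc_of_mem hT hτ, projIcc_of_right_le _ hw]

lemma clampedFlux_eq_zero_of_nonpos (hf : f 0 = 0) (hτ : τ ∈ Icc 0 T) (hw : w ⟨τ, hτ⟩ ≤ 0) :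
    clampedFlux f hT w τ = 0 := by
  rwa [clampedFlux_apply, projIcc_of_mem hT hτ, projIcc_of_le_left _ hw]

lemma abs_clampedFlux_sub_le {L : ℝ≥0} (hf : LipschitzWith L f) (hτ : τ ∈ Icc 0 T) {δ : ℝ}
    (hwz : |w ⟨τ, hτ⟩ - z ⟨τ, hτ⟩| ≤ δ) :
    |clampedFlux f hT w τ - clampedFlux f hT z τ| ≤ L * δ := by
  simp only [clampedFlux_apply, projIcc_of_mem hT hτ, ← Real.dist_eq] at hwz ⊢
  calc _ ≤ (L * 1 : ℝ≥0) * dist (w ⟨τ, hτ⟩) (z ⟨τ, hτ⟩) :=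
        (hf.comp (LipschitzWith.projIcc zero_le_one)).dist_le_mul _ _
    _ ≤ L * δ := by rw [mul_one]; gcongr

variable (f g)

/-- The heat field fed at `1` by the flux `f ∘ u₊` and drained at `-1` by the flux `g ∘ u₋`, where
`u = (u₊, u₋)`. -/
noncomputable def boundaryField : ℝ → ℝ → ℝ :=
  field φ (clampedFlux f hT (ContinuousMap.fst.comp u))
    (clampedFlux g hT (ContinuousMap.snd.comp u)) 1 (-1)

lemma continuous_boundaryField (x : ℝ) : Continuous fun t => boundaryField φ f g hT u t x :=
  (continuous_field φ _ _ 1 (-1)).comp (.prodMk_left x)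

/-- The map sending boundary values `u` to the traces at `1` and `-1` of the field they drive. -/
noncomputable def boundaryMap : C(Icc 0 T, ℝ × ℝ) where
  toFun t := (boundaryField φ f g hT u t 1, boundaryField φ f g hT u t (-1))
  continuous_toFun := ((continuous_boundaryField φ f g hT u 1).prodMk
    (continuous_boundaryField φ f g hT u (-1))).comp continuous_subtype_val

variable {φ f g u}

lemma boundaryField_mem_Icc (hper : Function.Periodic φ 4) (hφ : ∀ x, φ x ∈ Icc 0 1)
    (hf : ∀ a, 0 ≤ f a) (hg : ∀ a, 0 ≤ g a) (hf1 : f 1 = 0) (hg0 : g 0 = 0)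
    (hu : boundaryMap φ f g hT u = u) (ht : t ∈ Icc 0 T) (x : ℝ) :
    boundaryField φ f g hT u t x ∈ Icc 0 1 := by
  have htrace (t : Icc 0 T) : boundaryField φ f g hT u t 1 = (u t).1 ∧
      boundaryField φ f g hT u t (-1) = (u t).2 := Prod.ext_iff.1 (DFunLike.congr_fun hu t)
  refine ⟨field_nonneg hper (fun x => (hφ x).1) (clampedFlux_nonneg hT hf _) ?_ ht x, ?_⟩
  · exact fun t ht hneg =>
      clampedFlux_eq_zero_of_nonpos hT hg0 ht (((htrace ⟨t, ht⟩).2.symm.trans_lt hneg).le)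
  · rw [← sub_nonneg, boundaryField, one_sub_field]
    refine field_nonneg (fun x => by simp [hper x]) (fun x => by simpa using (hφ x).2)
      (clampedFlux_nonneg hT hg _) (fun t ht hneg => ?_) ht x
    rw [← one_sub_field, sub_neg] at hneg
    exact clampedFlux_eq_zero_of_one_le hT hf1 ht (hneg.trans_eq (htrace ⟨t, ht⟩).1).le

lemma exists_abs_boundaryField_sub_le {L M : ℝ≥0} (hf : LipschitzWith L f)
    (hg : LipschitzWith M g) :
    ∃ C, 0 ≤ C ∧ ∀ {μ D : ℝ} {u v : C(Icc 0 T, ℝ × ℝ)} {t : ℝ}, 0 < μ → t ∈ Icc 0 T →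
      (∀ τ, ‖u τ - v τ‖ ≤ D * Real.exp (μ * τ)) →
      ∀ x, |boundaryField φ f g hT u t x - boundaryField φ f g hT v t x| ≤
        C / √μ * (D * Real.exp (μ * t)) := by
  obtain ⟨C, hC0, hC⟩ := exists_abs_potential_le T
  refine ⟨C * (L + M), by positivity, fun {μ D u v t} hμ ht huv x => ?_⟩
  have hsource := hC (α := clampedFlux f hT (ContinuousMap.fst.comp u) -
    clampedFlux f hT (ContinuousMap.fst.comp v)) (D := L * D) hμ ht (fun τ hτ => by
      rw [mul_assoc]
      exact abs_clampedFlux_sub_le hT hf hτ ((norm_fst_le _).trans (huv ⟨τ, hτ⟩))) 1 x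
  have hsink := hC (α := clampedFlux g hT (ContinuousMap.snd.comp u) -
    clampedFlux g hT (ContinuousMap.snd.comp v)) (D := M * D) hμ ht (fun τ hτ => by
      rw [mul_assoc]
      exact abs_clampedFlux_sub_le hT hg hτ ((norm_snd_le _).trans (huv ⟨τ, hτ⟩))) (-1) x
  rw [potential_sub] at hsource hsink
  calc |boundaryField φ f g hT u t x - boundaryField φ f g hT v t x|
      ≤ C / √μ * (L * D * Real.exp (μ * t)) + C / √μ * (M * D * Real.exp (μ * t)) := by
        refine le_trans (le_of_eq ?_) ((abs_sub _ _).trans (add_le_add hsource hsink))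
        simp only [boundaryField, field]
        ring_nf
    _ = C * (L + M) / √μ * (D * Real.exp (μ * t)) := by ring

lemma existsUnique_boundaryMap_fixedPoint {L M : ℝ≥0} (hf : LipschitzWith L f)
    (hg : LipschitzWith M g) : ∃! u, boundaryMap φ f g hT u = u := by
  obtain ⟨C, hC0, hC⟩ := exists_abs_boundaryField_sub_le (φ := φ) hT hf hg
  have hμ : 0 < (C + 1) ^ 2 := by positivity
  have hq : C / (C + 1) < 1 := by rw [div_lt_one (by positivity)]; linarith
  refine existsUnique_fixedPoint_of_weighted (q := ⟨C / (C + 1), by positivity⟩)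
    (ω := ⟨fun t => Real.exp ((C + 1) ^ 2 * t), by fun_prop⟩) (fun t => Real.exp_pos _) hq
    fun u v D huv t => ?_
  have hbound := hC hμ t.2 huv
  rw [Real.sqrt_sq (by positivity)] at hbound
  exact norm_prod_le_iff.2 ⟨hbound 1, hbound (-1)⟩

end BoundaryMap

section Solutions

variable {f g ρ₀ : ℝ → ℝ} {T t : ℝ} {v : ℝ → ℝ × ℝ}

/-- The right-hand side of the boundary integral equation at the time `t` and the point `x`, for the
initial datum `ρ₀`, the flux `f` entering at `1` and the flux `g` leaving at `-1`. -/
noncomputable def boundaryRhs (f g ρ₀ : ℝ → ℝ) (u : ℝ → ℝ × ℝ) (t x : ℝ) : ℝ :=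
  (∫ r in (-1 : ℝ)..1, P t x r * ρ₀ r)
    + ∫ s in (0 : ℝ)..t, (P s x 1 * f (u (t - s)).1 - P s x (-1) * g (u (t - s)).2)

/-- Solutions on `[0, T]`, continuous and with values in `[0, 1]²`, of the system of boundary
integral equations. As `P 0 = 0`, the equations are imposed at positive times only. -/
def IsBoundarySolution (f g ρ₀ : ℝ → ℝ) (T : ℝ) (u : ℝ → ℝ × ℝ) : Prop :=
  ContinuousOn u (Icc 0 T) ∧
    (∀ t ∈ Icc 0 T, (u t).1 ∈ Icc (0 : ℝ) 1 ∧ (u t).2 ∈ Icc (0 : ℝ) 1) ∧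
    ∀ t ∈ Ioc 0 T, (u t).1 = boundaryRhs f g ρ₀ u t 1 ∧ (u t).2 = boundaryRhs f g ρ₀ u t (-1)

lemma boundaryRhs_const_mul (κ : ℝ) (f g ρ₀ : ℝ → ℝ) (u : ℝ → ℝ × ℝ) (t x : ℝ) :
    boundaryRhs (fun a => κ * f a) (fun a => κ * g a) ρ₀ u t x =
      (∫ r in (-1 : ℝ)..1, P t x r * ρ₀ r)
        + κ * ∫ s in (0 : ℝ)..t, (P s x 1 * f (u (t - s)).1 - P s x (-1) * g (u (t - s)).2) := by
  simp only [boundaryRhs, ← intervalIntegral.integral_const_mul, mul_sub, mul_left_comm]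

lemma boundaryRhs_eq_boundaryField (hf : ContinuousOn f (Icc 0 1)) (hg : ContinuousOn g (Icc 0 1))
    (hρ₀ : ContinuousOn ρ₀ (Icc (-1) 1)) (hT : 0 ≤ T) {u : C(Icc 0 T, ℝ × ℝ)}
    (hu : ∀ τ, (u τ).1 ∈ Icc (0 : ℝ) 1 ∧ (u τ).2 ∈ Icc (0 : ℝ) 1) (hvu : ∀ τ : Icc 0 T, v τ = u τ)
    (ht : t ∈ Ioc 0 T) (x : ℝ) :
    boundaryRhs f g ρ₀ v t x = boundaryField (reflectExtend ⟨_, hρ₀.domRestrict⟩)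
      ⟨_, hf.domRestrict⟩ ⟨_, hg.domRestrict⟩ hT u t x := by
  rw [boundaryRhs, integral_P_mul_eq_heat_reflectExtend hρ₀ ht.1, boundaryField, field,
    add_sub_assoc, potential, potential, ← intervalIntegral.integral_sub
      (intervalIntegrable_boundaryKernel_mul _ _ _ _ _)
      (intervalIntegrable_boundaryKernel_mul _ _ _ _ _)]
  congr 1
  refine intervalIntegral.integral_congr fun s hs => ?_
  rw [uIcc_of_le ht.1.le] at hs
  have hτ : t - s ∈ Icc 0 T := ⟨sub_nonneg.2 hs.2, by linarith [hs.1, ht.2]⟩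
  obtain ⟨h₁, h₂⟩ := hu ⟨t - s, hτ⟩
  rw [clampedFlux_of_mem (w := ContinuousMap.fst.comp u) hT hτ h₁,
    clampedFlux_of_mem (w := ContinuousMap.snd.comp u) hT hτ h₂, P_right_eq_boundaryKernel,
    P_left_eq_boundaryKernel, hvu ⟨t - s, hτ⟩]
  rfl

lemma IsBoundarySolution.boundaryMap_restrict (hf : ContinuousOn f (Icc 0 1))
    (hg : ContinuousOn g (Icc 0 1)) (hρ₀ : ContinuousOn ρ₀ (Icc (-1) 1)) (hT : 0 < T)
    (hv : IsBoundarySolution f g ρ₀ T v) :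
    boundaryMap (reflectExtend ⟨_, hρ₀.domRestrict⟩) ⟨_, hf.domRestrict⟩ ⟨_, hg.domRestrict⟩ hT.le
      ⟨_, hv.1.domRestrict⟩ = ⟨_, hv.1.domRestrict⟩ := by
  set φ := reflectExtend ⟨_, hρ₀.domRestrict⟩
  set V : C(Icc 0 T, ℝ × ℝ) := ⟨_, hv.1.domRestrict⟩
  set F := boundaryField φ ⟨_, hf.domRestrict⟩ ⟨_, hg.domRestrict⟩ hT.le V
  have hIoc : EqOn (fun t => (F t 1, F t (-1))) v (Ioc 0 T) := fun t ht => by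
    have hrhs := boundaryRhs_eq_boundaryField hf hg hρ₀ hT.le (u := V) (v := v)
      (fun τ => hv.2.1 τ τ.2) (fun τ => rfl) ht
    simp only [F, φ, ← hrhs]
    exact Prod.ext (hv.2.2 t ht).1.symm (hv.2.2 t ht).2.symm
  have hIcc := hIoc.of_subset_closure (t := Icc 0 T) (((continuous_boundaryField _ _ _ _ _ _).prodMk
    (continuous_boundaryField _ _ _ _ _ _)).continuousOn) hv.1 Ioc_subset_Icc_self
    (closure_Ioc hT.ne).ge
  exact ContinuousMap.ext fun t => hIcc t.2

lemma isBoundarySolution_IccExtend (hf : ContinuousOn f (Icc 0 1))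
    (hg : ContinuousOn g (Icc 0 1)) (hρ₀ : ContinuousOn ρ₀ (Icc (-1) 1)) (hT : 0 ≤ T)
    {u : C(Icc 0 T, ℝ × ℝ)} (hu01 : ∀ τ, (u τ).1 ∈ Icc (0 : ℝ) 1 ∧ (u τ).2 ∈ Icc (0 : ℝ) 1)
    (hu : boundaryMap (reflectExtend ⟨_, hρ₀.domRestrict⟩) ⟨_, hf.domRestrict⟩ ⟨_, hg.domRestrict⟩
      hT u = u) :
    IsBoundarySolution f g ρ₀ T (IccExtend hT u) := by
  refine ⟨u.continuous.Icc_extend'.continuousOn, fun t _ => hu01 _, fun t ht => ?_⟩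
  have hrhs := boundaryRhs_eq_boundaryField hf hg hρ₀ hT hu01 (v := IccExtend hT u)
    (IccExtend_val hT u) ht
  rw [hrhs, hrhs, IccExtend_of_mem hT u (Ioc_subset_Icc_self ht)]
  exact Prod.ext_iff.1 (DFunLike.congr_fun hu ⟨t, Ioc_subset_Icc_self ht⟩).symm

end Solutions

end BoundarySystem

open BoundarySystem

theorem boundary_system_wellposed_general {f g ρ₀ : ℝ → ℝ} {L M : ℝ≥0} {T : ℝ}
    (hf : LipschitzOnWith L f (Icc 0 1)) (hg : LipschitzOnWith M g (Icc 0 1))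
    (hf0 : ∀ a ∈ Icc 0 1, 0 ≤ f a) (hg0 : ∀ a ∈ Icc 0 1, 0 ≤ g a) (hf_one : f 1 = 0)
    (hg_zero : g 0 = 0) (hT : 0 < T) (hρ₀ : ContinuousOn ρ₀ (Icc (-1) 1))
    (hρ₀01 : ∀ r ∈ Icc (-1) 1, ρ₀ r ∈ Icc 0 1) :
    ∃ u, IsBoundarySolution f g ρ₀ T u ∧
      ∀ v, IsBoundarySolution f g ρ₀ T v → ∀ t ∈ Icc 0 T, v t = u t := by
  obtain ⟨u, hu, huniq⟩ := existsUnique_boundaryMap_fixedPoint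
    (φ := reflectExtend ⟨_, hρ₀.domRestrict⟩) (f := ⟨_, hf.continuousOn.domRestrict⟩)
    (g := ⟨_, hg.continuousOn.domRestrict⟩) hT.le hf.to_restrict hg.to_restrict
  have hfield {t : ℝ} (ht : t ∈ Icc 0 T) := boundaryField_mem_Icc hT.le
    (reflectExtend_periodic _) (fun x => by
      rw [reflectExtend_apply]
      exact hρ₀01 _ (triangleWave x).2) (fun a => hf0 a a.2) (fun a => hg0 a a.2)
    hf_one hg_zero hu ht
  have hu01 (τ : Icc 0 T) : (u τ).1 ∈ Icc (0 : ℝ) 1 ∧ (u τ).2 ∈ Icc (0 : ℝ) 1 := by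
    rw [← hu]
    exact ⟨hfield τ.2 1, hfield τ.2 (-1)⟩
  refine ⟨IccExtend hT.le u, isBoundarySolution_IccExtend hf.continuousOn hg.continuousOn hρ₀ hT.le
    hu01 hu, fun v hv t ht => ?_⟩
  rw [IccExtend_of_mem hT.le u ht, ← huniq _ (hv.boundaryMap_restrict hf.continuousOn
    hg.continuousOn hρ₀ hT)]
  rfl

/-- Well-posedness of the boundary system: given `j > 0`, an integer `K ≥ 1`,
`T > 0` and a continuous initial datum `ρ₀ : [−1,1] → [0,1]`, there is exactly one
pair `(u₊,u₋)` of continuous functions `[0,T] → [0,1]²` satisfying, for `t ∈ (0,T]`,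
`u_±(t) = ∫_{−1}^{1} P_t(±1,r)ρ₀(r)dr
  + (j/2)∫_0^t {P_s(±1,1)(1 − u₊(t−s)^K) − P_s(±1,−1)(1 − (1 − u₋(t−s))^K)} ds`.
(The pair is encoded as `u : ℝ → ℝ × ℝ`; uniqueness holds on `[0,T]`.) -/
theorem boundary_system_wellposed (j : ℝ) (hj : 0 < j) (K : ℕ) (hK : 1 ≤ K)
    (T : ℝ) (hT : 0 < T) (ρ₀ : ℝ → ℝ)
    (hρ₀c : ContinuousOn ρ₀ (Set.Icc (-1 : ℝ) 1))
    (hρ₀01 : ∀ r ∈ Set.Icc (-1 : ℝ) 1, ρ₀ r ∈ Set.Icc (0 : ℝ) 1) :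
    ∃ u : ℝ → ℝ × ℝ,
      (ContinuousOn u (Set.Icc 0 T) ∧
        (∀ t ∈ Set.Icc (0 : ℝ) T, (u t).1 ∈ Set.Icc (0 : ℝ) 1 ∧ (u t).2 ∈ Set.Icc (0 : ℝ) 1) ∧
        (∀ t ∈ Set.Ioc (0 : ℝ) T,
          (u t).1 = (∫ r in (-1 : ℝ)..1, P t 1 r * ρ₀ r)
            + j / 2 * ∫ s in (0 : ℝ)..t,
                (P s 1 1 * (1 - ((u (t - s)).1) ^ K)
                  - P s 1 (-1) * (1 - (1 - (u (t - s)).2) ^ K)) ∧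
          (u t).2 = (∫ r in (-1 : ℝ)..1, P t (-1) r * ρ₀ r)
            + j / 2 * ∫ s in (0 : ℝ)..t,
                (P s (-1) 1 * (1 - ((u (t - s)).1) ^ K)
                  - P s (-1) (-1) * (1 - (1 - (u (t - s)).2) ^ K)))) ∧
      ∀ v : ℝ → ℝ × ℝ,
        (ContinuousOn v (Set.Icc 0 T) ∧
          (∀ t ∈ Set.Icc (0 : ℝ) T, (v t).1 ∈ Set.Icc (0 : ℝ) 1 ∧ (v t).2 ∈ Set.Icc (0 : ℝ) 1) ∧
          (∀ t ∈ Set.Ioc (0 : ℝ) T,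
            (v t).1 = (∫ r in (-1 : ℝ)..1, P t 1 r * ρ₀ r)
              + j / 2 * ∫ s in (0 : ℝ)..t,
                  (P s 1 1 * (1 - ((v (t - s)).1) ^ K)
                    - P s 1 (-1) * (1 - (1 - (v (t - s)).2) ^ K)) ∧
            (v t).2 = (∫ r in (-1 : ℝ)..1, P t (-1) r * ρ₀ r)
              + j / 2 * ∫ s in (0 : ℝ)..t,
                  (P s (-1) 1 * (1 - ((v (t - s)).1) ^ K)
                    - P s (-1) (-1) * (1 - (1 - (v (t - s)).2) ^ K)))) →
        ∀ t ∈ Set.Icc (0 : ℝ) T, v t = u t := by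
  obtain ⟨L, hL⟩ := ContDiffOn.exists_lipschitzOnWith (f := fun a : ℝ => j / 2 * (1 - a ^ K))
    (n := 1) (by fun_prop) one_ne_zero (convex_Icc 0 1) isCompact_Icc
  obtain ⟨M, hM⟩ := ContDiffOn.exists_lipschitzOnWith (f := fun a : ℝ => j / 2 * (1 - (1 - a) ^ K))
    (n := 1) (by fun_prop) one_ne_zero (convex_Icc 0 1) isCompact_Icc
  have hflux {a : ℝ} (ha : a ∈ Set.Icc (0 : ℝ) 1) : 0 ≤ j / 2 * (1 - a ^ K) :=
    mul_nonneg (half_pos hj).le (sub_nonneg.2 (pow_le_one₀ ha.1 ha.2))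
  simpa only [IsBoundarySolution, boundaryRhs_const_mul] using
    boundary_system_wellposed_general hL hM (fun a ha => hflux ha)
      (fun a ha => hflux ⟨sub_nonneg.2 ha.2, sub_le_self 1 ha.1⟩) (by simp) (by simp) hT hρ₀c hρ₀01
end

section
/- (Monotonicity of the macroscopic equation.) Let j > 0 and K ≥ 1 an integer. Let ρ₀, ρ̃₀ : [−1,1] → [0,1] be bounded measurable with ρ₀(r) ≤ ρ̃₀(r) for all r ∈ [−1,1], and let ρ and ρ̃ be solutions of the macroscopic integral equation with initial data ρ₀ and ρ̃₀ respectively, whose boundary traces t ↦ (ρ(±1,t)) and t ↦ (ρ̃(±1,t)) are continuous. Then ρ(r,t) ≤ ρ̃(r,t) for all r ∈ [−1,1] and all t ≥ 0. -/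
open MeasureTheory

/-- `ρ : [−1,1] × [0,∞) → [0,1]` (encoded as `ρ : ℝ → ℝ → ℝ`, first argument the
space variable) is a bounded measurable solution of the macroscopic integral
equation with initial datum `ρ₀ : [−1,1] → [0,1]`: it takes values in `[0,1]`,
agrees with `ρ₀` at time `0`, and for all `t > 0`, `r ∈ [−1,1]`,
`ρ(r,t) = ∫_{−1}^{1} P_t(r,r')ρ₀(r')dr'
  + (j/2)∫_0^t [P_s(r,1)(1 − ρ(1,t−s)^K) − P_s(r,−1)(1 − (1 − ρ(−1,t−s))^K)] ds`. -/
def IsMacroSolution (j : ℝ) (K : ℕ) (ρ₀ : ℝ → ℝ) (ρ : ℝ → ℝ → ℝ) : Prop :=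
  Measurable (Function.uncurry ρ) ∧
  (∀ r ∈ Set.Icc (-1 : ℝ) 1, ∀ t : ℝ, 0 ≤ t → ρ r t ∈ Set.Icc (0 : ℝ) 1) ∧
  (∀ r ∈ Set.Icc (-1 : ℝ) 1, ρ r 0 = ρ₀ r) ∧
  (∀ t : ℝ, 0 < t → ∀ r ∈ Set.Icc (-1 : ℝ) 1,
    ρ r t = (∫ r' in (-1 : ℝ)..1, P t r r' * ρ₀ r')
      + j / 2 * ∫ s in (0 : ℝ)..t,
          (P s r 1 * (1 - (ρ 1 (t - s)) ^ K)
            - P s r (-1) * (1 - (1 - ρ (-1) (t - s)) ^ K)))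

/-!
The difference `u = σ - ρ` solves a linear heat equation on `[-1, 1]` whose boundary fluxes point
inwards wherever `u` is negative at the boundary, because `x ↦ x ^ K` is monotone. So a minimum
principle for the integral equation is enough. By the semigroup property of `P` the equation can be
restarted at any positive time, which also shows that `u` is continuous for `t > 0`, as `P s` is
`O(s ^ (-1/2))`. If `u` becomes negative, it touches a barrier `-ε (1 + t)` for a first time `t`, at
some point `x`. Restart a short time `h` before: the heat flow has mass one, so it keeps `u` above
`-ε (1 + t - h)`, a gain of `ε h`. The flux through a boundary point `e ≠ x` is felt at `x` only up
to `o(h)`, since `P s x e → 0` as `s → 0`, and for `e = x` the flux is inward near time `t`. Hence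
`u x t > -ε (1 + t)`, a contradiction.
-/

open Set Filter Topology

section Gaussian

lemma G_nonneg (t x y : ℝ) : 0 ≤ G t x y := by
  unfold G
  positivity

lemma G_congr {t x y x' y' : ℝ} (h : (x - y) ^ 2 = (x' - y') ^ 2) : G t x y = G t x' y' := by
  simp only [G, h]

lemma continuousAt_G {p : ℝ × ℝ × ℝ} (hp : 0 < p.1) :
    ContinuousAt (fun q : ℝ × ℝ × ℝ => G q.1 q.2.1 q.2.2) p := by
  unfold G
  fun_prop (disch := positivity)

variable {t h s : ℝ}

lemma G_eq_gaussianPDFReal (ht : 0 ≤ t) (x : ℝ) :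
    G t x = ProbabilityTheory.gaussianPDFReal x ⟨t, ht⟩ := by
  ext y
  calc G t x y = G t y x := G_congr (by ring)
    _ = ProbabilityTheory.gaussianPDFReal x ⟨t, ht⟩ y := div_eq_inv_mul _ _

lemma integrable_G (ht : 0 ≤ t) (x : ℝ) : Integrable (G t x) :=
  G_eq_gaussianPDFReal ht x ▸ ProbabilityTheory.integrable_gaussianPDFReal x _

lemma integral_G (ht : 0 < t) (x : ℝ) : ∫ y, G t x y = 1 :=
  G_eq_gaussianPDFReal ht.le x ▸
    ProbabilityTheory.integral_gaussianPDFReal_eq_one x (NNReal.coe_ne_zero.1 ht.ne')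

lemma G_mul_G (hh : 0 < h) (hs : 0 < s) (x y z : ℝ) :
    G h x z * G s z y =
      G (h + s) x y * G (h * s / (h + s)) ((s * x + h * y) / (h + s)) z := by
  unfold G
  rw [div_mul_div_comm, div_mul_div_comm, ← Real.exp_add, ← Real.exp_add,
    ← Real.sqrt_mul (by positivity), ← Real.sqrt_mul (by positivity)]
  congr 2
  · field_simp
    ring
  · field_simp

lemma integrable_G_mul_G (hh : 0 < h) (hs : 0 < s) (x y : ℝ) :
    Integrable (fun z => G h x z * G s z y) := by
  simp_rw [G_mul_G hh hs]
  exact (integrable_G (by positivity) _).const_mul _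

lemma integral_G_mul_G (hh : 0 < h) (hs : 0 < s) (x y : ℝ) :
    ∫ z, G h x z * G s z y = G (h + s) x y := by
  simp_rw [G_mul_G hh hs]
  rw [integral_const_mul, integral_G (by positivity), mul_one]

end Gaussian

section CircleHeatKernel

lemma summable_exp_neg_mul_int_sq {a : ℝ} (ha : 0 < a) :
    Summable fun n : ℤ => Real.exp (-(a * (n : ℝ) ^ 2)) := by
  refine (summable_pow_mul_jacobiTheta₂_term_bound 0 (div_pos ha Real.pi_pos) 0).congr fun n => ?_
  rw [pow_zero, one_mul]
  congr 1
  field_simp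
  ring

/-- The heat kernel of the circle `ℝ / 4ℤ`, i.e. the Gaussian made `4`-periodic; reflecting it at
`r = 1` gives the Neumann kernel `P`. -/
noncomputable def circleHeatKernel (t x y : ℝ) : ℝ := ∑' n : ℤ, G t x (y + 4 * n)

lemma circleHeatKernel_nonneg (t x y : ℝ) : 0 ≤ circleHeatKernel t x y :=
  tsum_nonneg fun _ => G_nonneg _ _ _

lemma circleHeatKernel_translate (t c x y : ℝ) :
    circleHeatKernel t (x + c) (y + c) = circleHeatKernel t x y :=
  tsum_congr fun _ => G_congr (by ring)

lemma circleHeatKernel_neg (t x y : ℝ) :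
    circleHeatKernel t (-x) (-y) = circleHeatKernel t x y := by
  rw [circleHeatKernel, ← (Equiv.neg ℤ).tsum_eq]
  exact tsum_congr fun n => G_congr (by simp only [Equiv.neg_apply, Int.cast_neg]; ring)

lemma circleHeatKernel_add_four_right (t x y : ℝ) :
    circleHeatKernel t x (y + 4) = circleHeatKernel t x y := by
  rw [circleHeatKernel, circleHeatKernel,
    ← (Equiv.addRight (1 : ℤ)).tsum_eq (fun n : ℤ => G t x (y + 4 * n))]
  refine tsum_congr fun n => G_congr ?_
  simp only [Equiv.coe_addRight, Int.cast_add, Int.cast_one]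
  ring

lemma circleHeatKernel_periodic_left (t y : ℝ) :
    Function.Periodic (fun x => circleHeatKernel t x y) 4 := fun x => by
  simp only [← circleHeatKernel_add_four_right t (x + 4) y, circleHeatKernel_translate]

variable {t h s : ℝ}

lemma G_add_four_mul_int_le (ht : 0 < t) (x y : ℝ) (n : ℤ) :
    G t x (y + 4 * n) ≤
      Real.exp ((x - y) ^ 2 / (2 * t)) / √(2 * Real.pi * t) *
        Real.exp (-(4 / t * (n : ℝ) ^ 2)) := by
  rw [G, div_mul_eq_mul_div, ← Real.exp_add]
  gcongr
  rw [div_add' _ _ _ (by positivity)]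
  gcongr
  field_simp
  nlinarith [sq_nonneg (x - y - 2 * n)]

lemma summable_G_add_four_mul_int (ht : 0 < t) (x y : ℝ) :
    Summable fun n : ℤ => G t x (y + 4 * n) :=
  .of_nonneg_of_le (fun _ => G_nonneg _ _ _) (G_add_four_mul_int_le ht x y)
    ((summable_exp_neg_mul_int_sq (by positivity)).mul_left _)

lemma continuousAt_circleHeatKernel {p : ℝ × ℝ × ℝ} (hp : 0 < p.1) :
    ContinuousAt (fun q : ℝ × ℝ × ℝ => circleHeatKernel q.1 q.2.1 q.2.2) p := by
  set R := |p.2.1 - p.2.2| + 1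
  set U : Set (ℝ × ℝ × ℝ) := Ioo (p.1 / 2) (2 * p.1) ×ˢ univ ∩ {q | |q.2.1 - q.2.2| < R}
  have hUo : IsOpen U := (isOpen_Ioo.prod isOpen_univ).inter (isOpen_lt (by fun_prop) (by fun_prop))
  have hpR : |p.2.1 - p.2.2| < R := lt_add_one _
  have hpU : p ∈ U := ⟨⟨⟨by linarith, by linarith⟩, trivial⟩, hpR⟩
  refine ContinuousOn.continuousAt ?_ (hUo.mem_nhds hpU)
  refine continuousOn_tsum (u := fun n : ℤ => Real.exp (R ^ 2 / p.1) / √(Real.pi * p.1) *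
    Real.exp (-(2 / p.1 * (n : ℝ) ^ 2))) (fun n q hq => ?_)
    ((summable_exp_neg_mul_int_sq (by positivity)).mul_left _) fun n q hq => ?_
  · have hq0 : 0 < q.1 := by linarith [hq.1.1.1]
    exact ((continuousAt_G (p := (q.1, q.2.1, q.2.2 + 4 * n)) hq0).comp
      (f := fun q : ℝ × ℝ × ℝ => (q.1, q.2.1, q.2.2 + 4 * n)) (by fun_prop)).continuousWithinAt
  · obtain ⟨⟨⟨hq1, hq2⟩, -⟩, hq3⟩ := hq
    change |q.2.1 - q.2.2| < R at hq3
    have hq0 : 0 < q.1 := by linarith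
    have hsq : (q.2.1 - q.2.2) ^ 2 ≤ R ^ 2 :=
      sq_le_sq' (by linarith [abs_lt.1 hq3]) (abs_lt.1 hq3).2.le
    rw [Real.norm_of_nonneg (G_nonneg _ _ _)]
    refine (G_add_four_mul_int_le hq0 _ _ n).trans ?_
    have h2q : p.1 ≤ 2 * q.1 := by linarith
    have hcoef : 2 / p.1 ≤ 4 / q.1 := by
      rw [div_le_div_iff₀ hp hq0]
      linarith
    have hden : Real.pi * p.1 ≤ 2 * Real.pi * q.1 := by nlinarith [Real.pi_pos]
    gcongr

lemma continuousOn_circleHeatKernel {X : Type*} [TopologicalSpace X] {S : Set X} {τ f g : X → ℝ}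
    (hτ : ContinuousOn τ S) (hf : ContinuousOn f S) (hg : ContinuousOn g S)
    (hpos : ∀ a ∈ S, 0 < τ a) :
    ContinuousOn (fun a => circleHeatKernel (τ a) (f a) (g a)) S := fun a ha =>
  (continuousAt_circleHeatKernel (p := (τ a, f a, g a)) (hpos a ha)).comp_continuousWithinAt
    (f := fun a => (τ a, f a, g a)) (hτ.prodMk (hf.prodMk hg) a ha)

lemma continuous_circleHeatKernel {X : Type*} [TopologicalSpace X] {f g : X → ℝ} (ht : 0 < t)
    (hf : Continuous f) (hg : Continuous g) :
    Continuous fun a => circleHeatKernel t (f a) (g a) := by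
  rw [← continuousOn_univ]
  exact continuousOn_circleHeatKernel continuousOn_const hf.continuousOn hg.continuousOn
    fun _ _ => ht

lemma abs_le_abs_sub_four_mul_int {x y : ℝ} (hxy : |x - y| ≤ 2) (n : ℤ) :
    |x - y| ≤ |x - (y + 4 * n)| ∧ |2 * (n : ℝ)| ≤ |x - (y + 4 * n)| := by
  rcases eq_or_ne n 0 with rfl | hn
  · simp
  have hn1 : (1 : ℝ) ≤ |(n : ℝ)| := by exact_mod_cast Int.one_le_abs hn
  have htri : 4 * |(n : ℝ)| - |x - y| ≤ |x - (y + 4 * n)| := by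
    rw [abs_sub_comm x (y + 4 * n)]
    calc 4 * |(n : ℝ)| - |x - y| = |4 * (n : ℝ)| - |x - y| := by
          rw [abs_mul, abs_of_pos (by norm_num : (0 : ℝ) < 4)]
      _ ≤ |4 * (n : ℝ) - (x - y)| := abs_sub_abs_le_abs_sub _ _
      _ = |y + 4 * n - x| := by ring_nf
  rw [abs_mul, abs_two]
  constructor <;> linarith

lemma exists_circleHeatKernel_le_gaussian {T : ℝ} (hT : 0 < T) :
    ∃ C, 0 ≤ C ∧ ∀ t ∈ Ioc 0 T, ∀ x y, |x - y| ≤ 2 →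
      circleHeatKernel t x y ≤ C * (t ^ (-(1 / 2) : ℝ) * Real.exp (-(x - y) ^ 2 / (4 * t))) := by
  have hsum := summable_exp_neg_mul_int_sq (inv_pos.2 hT)
  refine ⟨∑' n : ℤ, Real.exp (-(T⁻¹ * (n : ℝ) ^ 2)), tsum_nonneg fun n => (Real.exp_pos _).le, ?_⟩
  rintro t ⟨ht, htT⟩ x y hxy
  rw [← tsum_mul_right]
  refine (summable_G_add_four_mul_int ht x y).tsum_le_tsum (fun n => ?_) (hsum.mul_right _)
  have hquad : (x - y) ^ 2 / 2 + 2 * (n : ℝ) ^ 2 ≤ (x - (y + 4 * n)) ^ 2 := by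
    linarith [sq_le_sq.2 (abs_le_abs_sub_four_mul_int hxy n).1,
      sq_le_sq.2 (abs_le_abs_sub_four_mul_int hxy n).2]
  have hinv : T⁻¹ * (n : ℝ) ^ 2 ≤ t⁻¹ * (n : ℝ) ^ 2 := by gcongr
  have hexp : -(x - (y + 4 * n)) ^ 2 / (2 * t) ≤ -(T⁻¹ * (n : ℝ) ^ 2) + -(x - y) ^ 2 / (4 * t) :=
    calc -(x - (y + 4 * n)) ^ 2 / (2 * t)
        ≤ -((x - y) ^ 2 / 2 + 2 * (n : ℝ) ^ 2) / (2 * t) := by gcongr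
      _ = -(t⁻¹ * (n : ℝ) ^ 2) + -(x - y) ^ 2 / (4 * t) := by
          field_simp
          ring
      _ ≤ _ := by gcongr
  have hsqrt : t ^ (-(1 / 2) : ℝ) = (√t)⁻¹ := by rw [Real.rpow_neg ht.le, Real.sqrt_eq_rpow]
  calc G t x (y + 4 * n)
      ≤ Real.exp (-(T⁻¹ * (n : ℝ) ^ 2) + -(x - y) ^ 2 / (4 * t)) / √t := by
        unfold G
        gcongr
        nlinarith [Real.pi_gt_three]
    _ = _ := by
        rw [Real.exp_add, hsqrt]
        ring

lemma exists_circleHeatKernel_le_rpow {T : ℝ} (hT : 0 < T) :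
    ∃ C, 0 ≤ C ∧ ∀ t ∈ Ioc 0 T, ∀ x y, circleHeatKernel t x y ≤ C * t ^ (-(1 / 2) : ℝ) := by
  obtain ⟨C, hC, hle⟩ := exists_circleHeatKernel_le_gaussian hT
  refine ⟨C, hC, fun t ht x y => ?_⟩
  obtain ⟨x', hx', hxx'⟩ :=
    (circleHeatKernel_periodic_left t y).exists_mem_Ico (by norm_num) x (y - 2)
  have hx'y : |x' - y| ≤ 2 := abs_le.2 ⟨by linarith [hx'.1], by linarith [hx'.2]⟩
  have ht0 : 0 < t := ht.1
  have hexp : Real.exp (-(x' - y) ^ 2 / (4 * t)) ≤ 1 :=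
    Real.exp_le_one_iff.2 (div_nonpos_of_nonpos_of_nonneg (by nlinarith) (by positivity))
  calc circleHeatKernel t x y = circleHeatKernel t x' y := hxx'
    _ ≤ C * (t ^ (-(1 / 2) : ℝ) * Real.exp (-(x' - y) ^ 2 / (4 * t))) := hle t ht x' y hx'y
    _ ≤ C * (t ^ (-(1 / 2) : ℝ) * 1) := by gcongr
    _ = C * t ^ (-(1 / 2) : ℝ) := by rw [mul_one]

lemma tendsto_rpow_mul_exp_neg_div_nhdsGT_zero (a : ℝ) {b : ℝ} (hb : 0 < b) :
    Tendsto (fun t : ℝ => t ^ a * Real.exp (-b / t)) (𝓝[>] 0) (𝓝 0) := by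
  refine ((tendsto_rpow_mul_exp_neg_mul_atTop_nhds_zero (-a) b hb).comp
    tendsto_inv_nhdsGT_zero).congr' ?_
  filter_upwards [self_mem_nhdsWithin] with t ht
  rw [Function.comp_apply, Real.inv_rpow (le_of_lt ht), Real.rpow_neg (le_of_lt ht), inv_inv,
    div_eq_mul_inv]

lemma tendsto_circleHeatKernel_nhdsGT_zero {x y : ℝ} (hxy : |x - y| ≤ 2) (hne : x ≠ y) :
    Tendsto (fun t => circleHeatKernel t x y) (𝓝[>] 0) (𝓝 0) := by
  obtain ⟨C, -, hle⟩ := exists_circleHeatKernel_le_gaussian one_pos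
  have hb : 0 < (x - y) ^ 2 / 4 := by
    have := sub_ne_zero.2 hne
    positivity
  have hlim := (tendsto_rpow_mul_exp_neg_div_nhdsGT_zero (-(1 / 2)) hb).const_mul C
  rw [mul_zero] at hlim
  refine squeeze_zero' (.of_forall fun t => circleHeatKernel_nonneg t x y) ?_ hlim
  filter_upwards [Ioc_mem_nhdsGT one_pos] with t ht
  convert hle t ht x y hxy using 4
  ring

lemma integrable_G_mul {f : ℝ → ℝ} {C : ℝ} (ht : 0 ≤ t) (x : ℝ) (hf : Continuous f)
    (hC : ∀ z, |f z| ≤ C) : Integrable fun z => G t x z * f z :=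
  (integrable_G ht x).mul_bdd hf.aestronglyMeasurable (.of_forall hC)

lemma exists_abs_circleHeatKernel_le (hs : 0 < s) :
    ∃ C, ∀ z y, |circleHeatKernel s z y| ≤ C := by
  obtain ⟨C, -, hC⟩ := exists_circleHeatKernel_le_rpow hs
  refine ⟨C * s ^ (-(1 / 2) : ℝ), fun z y => ?_⟩
  rw [abs_of_nonneg (circleHeatKernel_nonneg _ _ _)]
  exact hC s ⟨hs, le_rfl⟩ z y

lemma integral_G_mul_circleHeatKernel (hh : 0 < h) (hs : 0 < s) (x y : ℝ) :
    ∫ z, G h x z * circleHeatKernel s z y = circleHeatKernel (h + s) x y := by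
  have hnorm (n : ℤ) : ∫ z, ‖G h x z * G s z (y + 4 * n)‖ = G (h + s) x (y + 4 * n) := by
    simp_rw [norm_mul, Real.norm_of_nonneg (G_nonneg _ _ _), integral_G_mul_G hh hs]
  have hswap := integral_tsum_of_summable_integral_norm
    (fun n : ℤ => integrable_G_mul_G hh hs x (y + 4 * n))
    (by simpa only [hnorm] using summable_G_add_four_mul_int (add_pos hh hs) x y)
  simp_rw [integral_G_mul_G hh hs, tsum_mul_left] at hswap
  exact hswap.symm

lemma intervalIntegral_tsum_comp_add_mul_int {f : ℝ → ℝ} (hf : Integrable f) (a : ℝ) {L : ℝ}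
    (hL : 0 < L) : ∫ z in a..a + L, ∑' n : ℤ, f (z + L * n) = ∫ z, f z := by
  set g : ℝ → ℝ := fun x => f (L * x + a) with hg
  have hgi : Integrable g := (hf.comp_add_right a).comp_mul_left' hL.ne'
  have hgint : L * ∫ x, g x = ∫ z, f z := by
    rw [hg, Measure.integral_comp_mul_left (fun z => f (z + a)) L, integral_add_right_eq_self,
      abs_of_pos (inv_pos.2 hL), smul_eq_mul, mul_inv_cancel_left₀ hL.ne']
  have hunit : ∫ x in (0 : ℝ)..1, ∑' n : ℤ, g (x + n) = ∫ x, g x := by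
    have hsum := hgi.hasSum_intervalIntegral_comp_add_int
    have hsum_norm := hgi.norm.hasSum_intervalIntegral_comp_add_int.summable
    simp only [intervalIntegral.integral_of_le zero_le_one] at hsum hsum_norm ⊢
    exact (hasSum_integral_of_summable_integral_norm
      (fun n : ℤ => (hgi.comp_add_right (n : ℝ)).restrict) hsum_norm).unique hsum
  have hshift (x : ℝ) (n : ℤ) : g (x + n) = f (L * x + a + L * n) := by
    simp only [hg]
    congr 1
    ring
  simp_rw [hshift] at hunit
  have hscale := intervalIntegral.mul_integral_comp_mul_add (a := 0) (b := 1)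
    (f := fun z => ∑' n : ℤ, f (z + L * n)) (c := L) (d := a)
  rw [hunit, hgint, mul_zero, zero_add, mul_one, add_comm L a] at hscale
  exact hscale.symm

end CircleHeatKernel

section NeumannKernel

lemma P_nonneg (t x y : ℝ) : 0 ≤ P t x y := by
  unfold P
  split_ifs
  · exact tsum_nonneg fun _ => mul_nonneg two_pos.le (G_nonneg _ _ _)
  · exact tsum_nonneg fun _ => add_nonneg (G_nonneg _ _ _) (G_nonneg _ _ _)

lemma P_boundary {e : ℝ} (he : e = 1 ∨ e = -1) (t x : ℝ) :
    P t x e = 2 * circleHeatKernel t x e := by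
  rw [P, if_pos he, tsum_mul_left, circleHeatKernel]

variable {t h s : ℝ}

lemma P_eq_circleHeatKernel_add (ht : 0 < t) (x y : ℝ) :
    P t x y = circleHeatKernel t x y + circleHeatKernel t x (2 - y) := by
  by_cases hy : y = 1 ∨ y = -1
  · rw [P_boundary hy, two_mul]
    rcases hy with rfl | rfl
    · norm_num
    · rw [← circleHeatKernel_add_four_right t x (-1)]
      norm_num
  · rw [P, if_neg hy]
    exact (summable_G_add_four_mul_int ht x y).tsum_add
      (summable_G_add_four_mul_int ht x (2 - y))

lemma P_periodic_left (ht : 0 < t) (y : ℝ) : Function.Periodic (fun x => P t x y) 4 := fun x => by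
  simp only [P_eq_circleHeatKernel_add ht]
  congr 1 <;> exact circleHeatKernel_periodic_left t _ x

lemma P_reflect_left (ht : 0 < t) (x y : ℝ) : P t (2 - x) y = P t x y := by
  have hreflect (y : ℝ) : circleHeatKernel t (2 - x) y = circleHeatKernel t x (2 - y) := by
    rw [← circleHeatKernel_neg, ← circleHeatKernel_translate t 2]
    ring_nf
  rw [P_eq_circleHeatKernel_add ht, P_eq_circleHeatKernel_add ht, hreflect, hreflect,
    sub_sub_cancel, add_comm]

lemma continuousOn_P {X : Type*} [TopologicalSpace X] {S : Set X} {τ f g : X → ℝ}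
    (hτ : ContinuousOn τ S) (hf : ContinuousOn f S) (hg : ContinuousOn g S)
    (hpos : ∀ a ∈ S, 0 < τ a) : ContinuousOn (fun a => P (τ a) (f a) (g a)) S :=
  ((continuousOn_circleHeatKernel hτ hf hg hpos).add
    (continuousOn_circleHeatKernel hτ hf (continuousOn_const.sub hg) hpos)).congr fun a ha =>
      P_eq_circleHeatKernel_add (hpos a ha) _ _

lemma continuous_P_s10 {X : Type*} [TopologicalSpace X] {f g : X → ℝ} (ht : 0 < t)
    (hf : Continuous f) (hg : Continuous g) : Continuous fun a => P t (f a) (g a) := by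
  rw [← continuousOn_univ]
  exact continuousOn_P continuousOn_const hf.continuousOn hg.continuousOn fun _ _ => ht

lemma exists_P_le_rpow {T : ℝ} (hT : 0 < T) :
    ∃ C, 0 ≤ C ∧ ∀ t ∈ Ioc 0 T, ∀ x y, P t x y ≤ C * t ^ (-(1 / 2) : ℝ) := by
  obtain ⟨C, hC, hle⟩ := exists_circleHeatKernel_le_rpow hT
  refine ⟨2 * C, by positivity, fun t ht x y => ?_⟩
  rw [P_eq_circleHeatKernel_add ht.1]
  linarith [hle t ht x y, hle t ht x (2 - y)]

lemma tendsto_P_nhdsGT_zero {x e : ℝ} (he : e = 1 ∨ e = -1) (hx : x ∈ Icc (-1) 1)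
    (hne : x ≠ e) : Tendsto (fun t => P t x e) (𝓝[>] 0) (𝓝 0) := by
  have hdist : |x - e| ≤ 2 := by
    rw [abs_le]
    rcases he with rfl | rfl <;> constructor <;> linarith [hx.1, hx.2]
  simp_rw [P_boundary he]
  simpa only [mul_zero] using (tendsto_circleHeatKernel_nhdsGT_zero hdist hne).const_mul 2

/- Method of images: `[-1, 1]` and its reflection `[1, 3]` make up one period of `F`, over which
the sum defining `circleHeatKernel` unfolds to the whole line. -/
lemma integral_P_mul_eq_integral_G_mul {F : ℝ → ℝ} (ht : 0 < t) (x : ℝ) (hF : Continuous F)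
    (hper : Function.Periodic F 4) (hrefl : ∀ z, F (2 - z) = F z)
    (hint : Integrable fun z => G t x z * F z) :
    ∫ z in (-1)..1, P t x z * F z = ∫ z, G t x z * F z := by
  have hcont : Continuous fun z => circleHeatKernel t x z * F z :=
    (continuous_circleHeatKernel ht continuous_const continuous_id).mul hF
  have hcont_reflect : Continuous fun z => circleHeatKernel t x (2 - z) * F z :=
    (continuous_circleHeatKernel ht continuous_const (by fun_prop)).mul hF
  have hsum (z : ℝ) : circleHeatKernel t x z * F z =
      ∑' n : ℤ, G t x (z + 4 * n) * F (z + 4 * n) := by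
    have hshift (n : ℤ) : F (z + 4 * n) = F z := by
      rw [mul_comm]
      exact hper.int_mul n z
    simp only [hshift, tsum_mul_right, circleHeatKernel]
  have himage : ∫ z in (-1)..1, circleHeatKernel t x (2 - z) * F z =
      ∫ z in 1..3, circleHeatKernel t x z * F z := by
    have hsub := intervalIntegral.integral_comp_sub_left (a := -1) (b := 1)
      (fun z => circleHeatKernel t x z * F z) 2
    simp only [hrefl] at hsub
    rw [hsub]
    norm_num
  calc ∫ z in (-1)..1, P t x z * F z
      = ∫ z in (-1)..1,
          (circleHeatKernel t x z * F z + circleHeatKernel t x (2 - z) * F z) := by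
        simp_rw [P_eq_circleHeatKernel_add ht, add_mul]
    _ = (∫ z in (-1)..1, circleHeatKernel t x z * F z) +
          ∫ z in 1..3, circleHeatKernel t x z * F z := by
        rw [intervalIntegral.integral_add (hcont.intervalIntegrable _ _)
          (hcont_reflect.intervalIntegrable _ _), himage]
    _ = ∫ z in (-1)..(-1 + 4), circleHeatKernel t x z * F z := by
        rw [intervalIntegral.integral_add_adjacent_intervals (hcont.intervalIntegrable _ _)
          (hcont.intervalIntegrable _ _)]
        norm_num
    _ = ∫ z, G t x z * F z := by
        simp_rw [hsum]
        exact intervalIntegral_tsum_comp_add_mul_int hint (-1) four_pos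

lemma integral_P (ht : 0 < t) (x : ℝ) : ∫ z in (-1)..1, P t x z = 1 := by
  simpa only [mul_one, integral_G ht] using integral_P_mul_eq_integral_G_mul ht x
    (F := fun _ => 1) continuous_const (fun _ => rfl) (fun _ => rfl)
    (by simpa only [mul_one] using integrable_G ht.le x)

lemma integral_P_mul_P (hh : 0 < h) (hs : 0 < s) (x y : ℝ) :
    ∫ z in (-1)..1, P h x z * P s z y = P (h + s) x y := by
  have hint (y : ℝ) : Integrable fun z => G h x z * circleHeatKernel s z y := by
    obtain ⟨C, hC⟩ := exists_abs_circleHeatKernel_le hs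
    exact integrable_G_mul hh.le x (continuous_circleHeatKernel hs continuous_id continuous_const)
      fun z => hC z y
  have hadd (z : ℝ) : G h x z * P s z y =
      G h x z * circleHeatKernel s z y + G h x z * circleHeatKernel s z (2 - y) := by
    rw [P_eq_circleHeatKernel_add hs, mul_add]
  rw [integral_P_mul_eq_integral_G_mul hh x (F := fun z => P s z y)
    (continuous_P_s10 hs continuous_id continuous_const)
    (P_periodic_left hs y) (fun z => P_reflect_left hs z y)
    (((hint y).add (hint (2 - y))).congr (.of_forall fun z => (hadd z).symm))]
  simp_rw [hadd]
  rw [integral_add (hint y) (hint (2 - y)), integral_G_mul_circleHeatKernel hh hs,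
    integral_G_mul_circleHeatKernel hh hs, P_eq_circleHeatKernel_add (add_pos hh hs)]

end NeumannKernel

section NeumannFlow

/-- The Neumann heat semigroup on `[-1, 1]`: the solution at time `t` of the heat equation with
reflecting boundary and initial datum `f`. -/
noncomputable def neumannFlow (t : ℝ) (f : ℝ → ℝ) (x : ℝ) : ℝ := ∫ z in (-1)..1, P t x z * f z

lemma neumannFlow_congr {f g : ℝ → ℝ} (hfg : EqOn f g (Icc (-1) 1)) (t x : ℝ) :
    neumannFlow t f x = neumannFlow t g x :=
  intervalIntegral.integral_congr fun z hz => by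
    rw [uIcc_of_le (by norm_num)] at hz
    simp only [hfg hz]

variable {t h : ℝ} {f g : ℝ → ℝ}

lemma intervalIntegrable_P_mul (ht : 0 < t) (hf : IntervalIntegrable f volume (-1) 1) (x : ℝ) :
    IntervalIntegrable (fun z => P t x z * f z) volume (-1) 1 :=
  hf.continuousOn_mul (continuous_P_s10 ht continuous_const continuous_id).continuousOn

lemma neumannFlow_add (ht : 0 < t) (hf : IntervalIntegrable f volume (-1) 1)
    (hg : IntervalIntegrable g volume (-1) 1) (x : ℝ) :
    neumannFlow t (fun z => f z + g z) x = neumannFlow t f x + neumannFlow t g x := by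
  simp only [neumannFlow, mul_add]
  exact intervalIntegral.integral_add (intervalIntegrable_P_mul ht hf x)
    (intervalIntegrable_P_mul ht hg x)

lemma neumannFlow_sub (ht : 0 < t) (hf : IntervalIntegrable f volume (-1) 1)
    (hg : IntervalIntegrable g volume (-1) 1) (x : ℝ) :
    neumannFlow t (fun z => f z - g z) x = neumannFlow t f x - neumannFlow t g x := by
  simp only [neumannFlow, mul_sub]
  exact intervalIntegral.integral_sub (intervalIntegrable_P_mul ht hf x)
    (intervalIntegrable_P_mul ht hg x)

lemma le_neumannFlow {A : ℝ} (ht : 0 < t) (hf : IntervalIntegrable f volume (-1) 1)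
    (hA : ∀ z ∈ Icc (-1) 1, A ≤ f z) (x : ℝ) : A ≤ neumannFlow t f x :=
  calc A = ∫ z in (-1)..1, P t x z * A := by
        rw [intervalIntegral.integral_mul_const, integral_P ht, one_mul]
    _ ≤ neumannFlow t f x :=
        intervalIntegral.integral_mono_on (by norm_num)
          (intervalIntegrable_P_mul ht intervalIntegrable_const x)
          (intervalIntegrable_P_mul ht hf x)
          fun z hz => mul_le_mul_of_nonneg_left (hA z hz) (P_nonneg t x z)

lemma continuousAt_neumannFlow {p : ℝ × ℝ} (hp : 0 < p.2)
    (hf : IntervalIntegrable f volume (-1) 1) :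
    ContinuousAt (fun q : ℝ × ℝ => neumannFlow q.2 f q.1) p := by
  obtain ⟨C, hC, hP⟩ := exists_P_le_rpow (by positivity : 0 < 2 * p.2)
  have hnear : ∀ᶠ q : ℝ × ℝ in 𝓝 p, q.2 ∈ Ioo (p.2 / 2) (2 * p.2) :=
    continuousAt_snd.eventually (Ioo_mem_nhds (by linarith) (by linarith))
  refine intervalIntegral.continuousAt_of_dominated_interval
    (bound := fun z => C * (p.2 / 2) ^ (-(1 / 2) : ℝ) * ‖f z‖) ?_ ?_ (hf.norm.const_mul _) ?_
  · filter_upwards [hnear] with q hq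
    have hq0 : 0 < q.2 := by linarith [hq.1]
    exact (intervalIntegrable_P_mul hq0 hf q.1).aestronglyMeasurable_restrict_uIoc
  · filter_upwards [hnear] with q hq
    have hq0 : 0 < q.2 := by linarith [hq.1]
    refine .of_forall fun z _ => ?_
    rw [norm_mul, Real.norm_of_nonneg (P_nonneg _ _ _)]
    gcongr
    calc P q.2 q.1 z ≤ C * q.2 ^ (-(1 / 2) : ℝ) := hP _ ⟨hq0, hq.2.le⟩ _ _
      _ ≤ C * (p.2 / 2) ^ (-(1 / 2) : ℝ) :=
        mul_le_mul_of_nonneg_left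
          (Real.rpow_le_rpow_of_nonpos (by positivity) hq.1.le (by norm_num)) hC
  · refine .of_forall fun z _ => ContinuousAt.mul ?_ continuousAt_const
    refine (continuousOn_P continuousOn_snd continuousOn_fst continuousOn_const
      fun q hq => ?_).continuousAt ((isOpen_lt continuous_const continuous_snd).mem_nhds hp)
    exact hq

lemma intervalIntegrable_neumannFlow (ht : 0 < t) (hf : IntervalIntegrable f volume (-1) 1) :
    IntervalIntegrable (neumannFlow t f) volume (-1) 1 :=
  Continuous.intervalIntegrable (continuous_iff_continuousAt.2 fun x =>
    (continuousAt_neumannFlow (p := (x, t)) ht hf).comp (f := fun x => (x, t)) (by fun_prop)) _ _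

lemma neumannFlow_intervalIntegral {F : ℝ → ℝ → ℝ} {a b : ℝ} (hh : 0 < h)
    (hF : IntegrableOn (Function.uncurry F) (uIoc (-1) 1 ×ˢ uIoc a b)) (x : ℝ) :
    neumannFlow h (fun z => ∫ y in a..b, F z y) x =
      ∫ y in a..b, neumannFlow h (fun z => F z y) x := by
  obtain ⟨C, -, hP⟩ := exists_P_le_rpow hh
  have hint : IntegrableOn (Function.uncurry fun z y => P h x z * F z y)
      (uIoc (-1) 1 ×ˢ uIoc a b) := by
    refine Integrable.bdd_mul (c := C * h ^ (-(1 / 2) : ℝ)) hF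
      (continuous_P_s10 hh continuous_const continuous_fst).aestronglyMeasurable
      (.of_forall fun q => ?_)
    rw [Real.norm_of_nonneg (P_nonneg _ _ _)]
    exact hP h ⟨hh, le_rfl⟩ x q.1
  simp only [neumannFlow, ← intervalIntegral.integral_const_mul]
  exact intervalIntegral_intervalIntegral_swap hint

lemma neumannFlow_P_mul (hh : 0 < h) (ht : 0 < t) (c x y : ℝ) :
    neumannFlow h (fun z => P t z y * c) x = P (h + t) x y * c := by
  simp only [neumannFlow, ← mul_assoc]
  rw [intervalIntegral.integral_mul_const, integral_P_mul_P hh ht]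

lemma neumannFlow_neumannFlow (hh : 0 < h) (ht : 0 < t)
    (hf : IntervalIntegrable f volume (-1) 1) (x : ℝ) :
    neumannFlow h (neumannFlow t f) x = neumannFlow (h + t) f x := by
  obtain ⟨C, -, hP⟩ := exists_P_le_rpow ht
  have hint : IntegrableOn (Function.uncurry fun z y => P t z y * f y)
      (uIoc (-1) 1 ×ˢ uIoc (-1) 1) := by
    refine Integrable.bdd_mul (c := C * t ^ (-(1 / 2) : ℝ)) ?_
      (continuous_P_s10 ht continuous_fst continuous_snd).aestronglyMeasurable (.of_forall fun q => ?_)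
    · rw [uIoc_of_le (by norm_num : (-1 : ℝ) ≤ 1), Measure.volume_eq_prod, ← Measure.prod_restrict]
      exact hf.1.comp_snd _
    · rw [Real.norm_of_nonneg (P_nonneg _ _ _)]
      exact hP t ⟨ht, le_rfl⟩ q.1 q.2
  exact (neumannFlow_intervalIntegral hh hint x).trans
    (intervalIntegral.integral_congr fun y _ => neumannFlow_P_mul hh ht _ _ _)

end NeumannFlow

section BoundaryPotential

/-- The contribution to the solution at time `t`, position `x`, of the flux `b` that entered
through the boundary point `e` during the last `h` units of time. -/
noncomputable def boundaryPotential (e : ℝ) (b : ℝ → ℝ) (t h x : ℝ) : ℝ :=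
  ∫ s in 0..h, P s x e * b (t - s)

/-- An admissible boundary flux: a measurable function of time, bounded on `[0, ∞)`. -/
def IsFlux (b : ℝ → ℝ) : Prop := Measurable b ∧ ∃ M, ∀ t, 0 ≤ t → |b t| ≤ M

lemma IsFlux.sub {a b : ℝ → ℝ} (ha : IsFlux a) (hb : IsFlux b) : IsFlux fun t => a t - b t := by
  obtain ⟨ham, M, hM⟩ := ha
  obtain ⟨hbm, N, hN⟩ := hb
  exact ⟨ham.sub hbm, M + N, fun t ht => (abs_sub _ _).trans (add_le_add (hM t ht) (hN t ht))⟩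

variable {a b : ℝ → ℝ} {t h : ℝ}

lemma exists_abs_P_mul_le (hb : IsFlux b) (T : ℝ) :
    ∃ C, 0 ≤ C ∧ ∀ s ∈ Ioc 0 T, ∀ τ, 0 ≤ τ → ∀ x e, |P s x e * b τ| ≤ C * s ^ (-(1 / 2) : ℝ) := by
  obtain ⟨-, M, hM⟩ := hb
  obtain ⟨C, hC, hP⟩ := exists_P_le_rpow (lt_max_of_lt_right one_pos : 0 < max T 1)
  have hM0 : 0 ≤ M := (abs_nonneg _).trans (hM 0 le_rfl)
  refine ⟨C * M, by positivity, fun s hs τ hτ x e => ?_⟩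
  have hPs := hP s ⟨hs.1, hs.2.trans (le_max_left T 1)⟩ x e
  rw [abs_mul, abs_of_nonneg (P_nonneg _ _ _), mul_right_comm]
  exact mul_le_mul hPs (hM τ hτ) (abs_nonneg _) ((P_nonneg _ _ _).trans hPs)

lemma integral_rpow_neg_half (h : ℝ) : ∫ s in 0..h, s ^ (-(1 / 2) : ℝ) = 2 * √h := by
  rw [integral_rpow (.inl (by norm_num)), Real.sqrt_eq_rpow, Real.zero_rpow (by norm_num)]
  norm_num
  ring

lemma intervalIntegrable_P_mul_flux (hb : IsFlux b) (hh : 0 ≤ h) (hht : h ≤ t) (x e : ℝ) :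
    IntervalIntegrable (fun s => P s x e * b (t - s)) volume 0 h := by
  obtain ⟨C, -, hC⟩ := exists_abs_P_mul_le hb h
  have hdom : IntervalIntegrable (fun s => C * s ^ (-(1 / 2) : ℝ)) volume 0 h :=
    (intervalIntegral.intervalIntegrable_rpow' (by norm_num)).const_mul C
  rw [intervalIntegrable_iff_integrableOn_Ioc_of_le hh]
  refine hdom.1.mono' ?_ ?_
  · refine AEStronglyMeasurable.mul ?_
      (hb.1.comp (measurable_const.sub measurable_id)).aestronglyMeasurable
    exact (continuousOn_P continuousOn_id continuousOn_const continuousOn_const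
      fun s hs => hs.1).aestronglyMeasurable measurableSet_Ioc
  · filter_upwards [ae_restrict_mem measurableSet_Ioc] with s hs
    exact hC s hs (t - s) (by linarith [hs.2]) x e

lemma boundaryPotential_sub (ha : IsFlux a) (hb : IsFlux b) (ht : 0 ≤ t) (e x : ℝ) :
    boundaryPotential e (fun τ => a τ - b τ) t t x =
      boundaryPotential e a t t x - boundaryPotential e b t t x := by
  simp only [boundaryPotential, mul_sub]
  exact intervalIntegral.integral_sub (intervalIntegrable_P_mul_flux ha ht le_rfl x e)
    (intervalIntegrable_P_mul_flux hb ht le_rfl x e)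

lemma exists_abs_boundaryPotential_le (hb : IsFlux b) (T : ℝ) :
    ∃ C, 0 ≤ C ∧ ∀ h ∈ Icc 0 T, ∀ t, h ≤ t → ∀ e x, |boundaryPotential e b t h x| ≤ C * √h := by
  obtain ⟨C, hC0, hC⟩ := exists_abs_P_mul_le hb T
  refine ⟨C * 2, by positivity, fun h hh t hht e x => ?_⟩
  calc |boundaryPotential e b t h x| ≤ ∫ s in 0..h, C * s ^ (-(1 / 2) : ℝ) :=
        intervalIntegral.norm_integral_le_of_norm_le (f := fun s => P s x e * b (t - s)) hh.1
          (.of_forall fun s hs => hC s ⟨hs.1, hs.2.trans hh.2⟩ (t - s) (by linarith [hs.2]) x e)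
          ((intervalIntegral.intervalIntegrable_rpow' (by norm_num)).const_mul C)
    _ = C * 2 * √h := by
        rw [intervalIntegral.integral_const_mul, integral_rpow_neg_half, mul_assoc]

lemma integrableOn_P_mul_flux (hb : IsFlux b) (ht : 0 ≤ t) (e : ℝ) :
    IntegrableOn (Function.uncurry fun z s => P s z e * b (t - s)) (uIoc (-1) 1 ×ˢ uIoc 0 t) := by
  obtain ⟨C, -, hC⟩ := exists_abs_P_mul_le hb t
  rw [uIoc_of_le ht, uIoc_of_le (by norm_num)]
  have hdom : IntegrableOn (fun q : ℝ × ℝ => C * q.2 ^ (-(1 / 2) : ℝ))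
      (Ioc (-1) 1 ×ˢ Ioc 0 t) := by
    rw [IntegrableOn, Measure.volume_eq_prod, ← Measure.prod_restrict]
    exact ((intervalIntegral.intervalIntegrable_rpow' (by norm_num)).const_mul C).1.comp_snd _
  refine hdom.mono' ?_ ?_
  · refine AEStronglyMeasurable.mul ?_
      (hb.1.comp (measurable_const.sub measurable_snd)).aestronglyMeasurable
    exact (continuousOn_P continuousOn_snd continuousOn_fst continuousOn_const
      fun q hq => hq.2.1).aestronglyMeasurable (measurableSet_Ioc.prod measurableSet_Ioc)
  · filter_upwards [ae_restrict_mem (measurableSet_Ioc.prod measurableSet_Ioc)] with q hq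
    exact hC q.2 hq.2 (t - q.2) (by linarith [hq.2.2]) q.1 e

lemma intervalIntegrable_boundaryPotential (hb : IsFlux b) (ht : 0 ≤ t) (e : ℝ) :
    IntervalIntegrable (boundaryPotential e b t t) volume (-1) 1 := by
  have hint := integrableOn_P_mul_flux hb ht e
  rw [IntegrableOn, Measure.volume_eq_prod, ← Measure.prod_restrict] at hint
  rw [intervalIntegrable_iff]
  refine hint.integral_prod_left.congr (.of_forall fun z => ?_)
  simp only [Function.uncurry, boundaryPotential, intervalIntegral.integral_of_le ht,
    uIoc_of_le ht]

lemma neumannFlow_boundaryPotential_add (hb : IsFlux b) (hh : 0 < h) (ht : 0 ≤ t) (e x : ℝ) :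
    neumannFlow h (boundaryPotential e b t t) x + boundaryPotential e b (t + h) h x =
      boundaryPotential e b (t + h) (t + h) x := by
  have hflow : neumannFlow h (boundaryPotential e b t t) x =
      ∫ s in h..t + h, P s x e * b (t + h - s) :=
    calc neumannFlow h (boundaryPotential e b t t) x
        = ∫ s in 0..t, neumannFlow h (fun z => P s z e * b (t - s)) x :=
          neumannFlow_intervalIntegral hh (integrableOn_P_mul_flux hb ht e) x
      _ = ∫ s in 0..t, P (s + h) x e * b (t + h - (s + h)) := by
          refine intervalIntegral.integral_congr_ae (.of_forall fun s hs => ?_)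
          rw [uIoc_of_le ht] at hs
          rw [neumannFlow_P_mul hh hs.1, add_comm h s, add_sub_add_right_eq_sub]
      _ = ∫ s in h..t + h, P s x e * b (t + h - s) := by
          rw [intervalIntegral.integral_comp_add_right (fun s => P s x e * b (t + h - s)) h,
            zero_add]
  have hinit := intervalIntegrable_P_mul_flux hb hh.le (by linarith : h ≤ t + h) x e
  have hfull := intervalIntegrable_P_mul_flux hb (by positivity) (le_refl (t + h)) x e
  rw [hflow, add_comm]
  exact intervalIntegral.integral_add_adjacent_intervals hinit (hinit.symm.trans hfull)

lemma eventually_le_boundaryPotential {e x c : ℝ} (hb : IsFlux b) (he : e = 1 ∨ e = -1)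
    (hx : x ∈ Icc (-1) 1) (ht : 0 < t) (hc : 0 < c) (hsign : x = e → ∀ᶠ τ in 𝓝 t, 0 ≤ b τ) :
    ∀ᶠ h in 𝓝[>] 0, -(c * h) ≤ boundaryPotential e b t h x := by
  have hpointwise : ∀ᶠ s in 𝓝[>] 0, -c ≤ P s x e * b (t - s) := by
    by_cases hxe : x = e
    · have hshift : Tendsto (fun s => t - s) (𝓝[>] 0) (𝓝 t) :=
        ((continuous_sub_left t).tendsto' 0 t (sub_zero t)).mono_left nhdsWithin_le_nhds
      filter_upwards [hshift.eventually (hsign hxe)] with s hs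
      linarith [mul_nonneg (P_nonneg s x e) hs]
    · obtain ⟨-, M, hM⟩ := hb
      have hlim : Tendsto (fun s => P s x e * M) (𝓝[>] 0) (𝓝 0) := by
        simpa only [zero_mul] using (tendsto_P_nhdsGT_zero he hx hxe).mul_const M
      filter_upwards [hlim.eventually_lt_const hc, Ioc_mem_nhdsGT ht] with s hs hst
      have habs : |P s x e * b (t - s)| ≤ P s x e * M := by
        rw [abs_mul, abs_of_nonneg (P_nonneg _ _ _)]
        exact mul_le_mul_of_nonneg_left (hM _ (by linarith [hst.2])) (P_nonneg _ _ _)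
      linarith [neg_le_of_abs_le habs]
  obtain ⟨δ, hδ, hle⟩ := mem_nhdsGT_iff_exists_Ioc_subset.1 hpointwise
  filter_upwards [Ioc_mem_nhdsGT hδ, Ioc_mem_nhdsGT ht] with h hhδ hht
  calc -(c * h) = ∫ _s in 0..h, -c := by
        rw [intervalIntegral.integral_const, smul_eq_mul]
        ring
    _ ≤ boundaryPotential e b t h x :=
        intervalIntegral.integral_mono_on_of_le_Ioo hhδ.1.le intervalIntegrable_const
          (intervalIntegrable_P_mul_flux hb hhδ.1.le hht.2 x e)
          fun s hs => hle ⟨hs.1, hs.2.le.trans hhδ.2⟩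

end BoundaryPotential

section MildSolution

/-- Mild solutions, in Duhamel form, of the heat equation on `[-1, 1]` whose inward boundary
fluxes are `α` at `1` and `β` at `-1`. -/
structure IsMildSolution (α β : ℝ → ℝ) (u : ℝ → ℝ → ℝ) : Prop where
  intervalIntegrable_initial : IntervalIntegrable (fun z => u z 0) volume (-1) 1
  isFlux_right : IsFlux α
  isFlux_left : IsFlux β
  duhamel : ∀ t, 0 < t → ∀ x ∈ Icc (-1 : ℝ) 1,
    u x t = neumannFlow t (fun z => u z 0) x + boundaryPotential 1 α t t x +
      boundaryPotential (-1) β t t x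

namespace IsMildSolution

variable {α β α' β' : ℝ → ℝ} {u v : ℝ → ℝ → ℝ} {t h x : ℝ}

lemma sub (hu : IsMildSolution α β u) (hv : IsMildSolution α' β' v) :
    IsMildSolution (fun t => α t - α' t) (fun t => β t - β' t) fun x t => u x t - v x t where
  intervalIntegrable_initial := hu.intervalIntegrable_initial.sub hv.intervalIntegrable_initial
  isFlux_right := hu.isFlux_right.sub hv.isFlux_right
  isFlux_left := hu.isFlux_left.sub hv.isFlux_left
  duhamel t ht x hx := by
    rw [hu.duhamel t ht x hx, hv.duhamel t ht x hx,
      neumannFlow_sub ht hu.intervalIntegrable_initial hv.intervalIntegrable_initial,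
      boundaryPotential_sub hu.isFlux_right hv.isFlux_right ht.le,
      boundaryPotential_sub hu.isFlux_left hv.isFlux_left ht.le]
    ring

lemma intervalIntegrable (hu : IsMildSolution α β u) (ht : 0 ≤ t) :
    IntervalIntegrable (fun z => u z t) volume (-1) 1 := by
  rcases ht.eq_or_lt with rfl | ht
  · exact hu.intervalIntegrable_initial
  refine IntervalIntegrable.congr (fun z hz => ?_)
    (((intervalIntegrable_neumannFlow ht hu.intervalIntegrable_initial).add
      (intervalIntegrable_boundaryPotential hu.isFlux_right ht.le 1)).add
      (intervalIntegrable_boundaryPotential hu.isFlux_left ht.le (-1)))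
  rw [uIoc_of_le (by norm_num)] at hz
  exact (hu.duhamel t ht z (Ioc_subset_Icc_self hz)).symm

lemma restart (hu : IsMildSolution α β u) (ht : 0 ≤ t) (hh : 0 < h) (hx : x ∈ Icc (-1) 1) :
    u x (t + h) = neumannFlow h (fun z => u z t) x + boundaryPotential 1 α (t + h) h x +
      boundaryPotential (-1) β (t + h) h x := by
  rcases ht.eq_or_lt with rfl | ht
  · simpa only [zero_add] using hu.duhamel h hh x hx
  have hflow := intervalIntegrable_neumannFlow ht hu.intervalIntegrable_initial
  have hright := intervalIntegrable_boundaryPotential hu.isFlux_right ht.le 1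
  have hleft := intervalIntegrable_boundaryPotential hu.isFlux_left ht.le (-1)
  rw [hu.duhamel (t + h) (by positivity) x hx,
    ← neumannFlow_boundaryPotential_add hu.isFlux_right hh ht.le,
    ← neumannFlow_boundaryPotential_add hu.isFlux_left hh ht.le,
    neumannFlow_congr (hu.duhamel t ht), neumannFlow_add hh (hflow.add hright) hleft,
    neumannFlow_add hh hflow hright, neumannFlow_neumannFlow hh ht hu.intervalIntegrable_initial,
    add_comm h t]
  ring

lemma exists_abs_sub_neumannFlow_le (hu : IsMildSolution α β u) (T : ℝ) :
    ∃ C, 0 ≤ C ∧ ∀ t, 0 ≤ t → ∀ h ∈ Ioc 0 T, ∀ x ∈ Icc (-1 : ℝ) 1,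
      |u x (t + h) - neumannFlow h (fun z => u z t) x| ≤ C * √h := by
  obtain ⟨A, hA0, hA⟩ := exists_abs_boundaryPotential_le hu.isFlux_right T
  obtain ⟨B, hB0, hB⟩ := exists_abs_boundaryPotential_le hu.isFlux_left T
  refine ⟨A + B, by positivity, fun t ht h hh x hx => ?_⟩
  have hhT := Ioc_subset_Icc_self hh
  rw [hu.restart ht hh.1 hx, add_assoc, add_sub_cancel_left, add_mul]
  exact (abs_add_le _ _).trans (add_le_add (hA h hhT _ (by linarith) 1 x)
    (hB h hhT _ (by linarith) (-1) x))

lemma continuousOn (hu : IsMildSolution α β u) :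
    ContinuousOn (fun q : ℝ × ℝ => u q.1 q.2) (Icc (-1) 1 ×ˢ Ioi 0) := by
  rintro ⟨x, t⟩ ⟨hx, ht : 0 < t⟩
  obtain ⟨C, hC0, hC⟩ := hu.exists_abs_sub_neumannFlow_le t
  refine continuousWithinAt_of_locally_uniform_approx_of_continuousWithinAt ⟨hx, ht⟩
    fun V hV => ?_
  obtain ⟨ε, hε, hεV⟩ := Metric.mem_uniformity_dist.1 hV
  have hsmall : ∀ᶠ η in 𝓝[>] (0 : ℝ), C * √(2 * η) < ε :=
    ((Continuous.tendsto' (by fun_prop) 0 0 (by simp)).mono_left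
      nhdsWithin_le_nhds).eventually_lt_const hε
  obtain ⟨η, hηε, hη0, hηt⟩ := (hsmall.and (Ioo_mem_nhdsGT (half_pos ht))).exists
  refine ⟨(Icc (-1) 1 ×ˢ Ioi 0) ∩ {q | q.2 ∈ Ioo (t - η) (t + η)},
    inter_mem self_mem_nhdsWithin (mem_nhdsWithin_of_mem_nhds
      (continuousAt_snd.eventually (Ioo_mem_nhds (by linarith) (by linarith)))),
    fun q => neumannFlow (q.2 - (t - η)) (fun z => u z (t - η)) q.1, ?_, fun q hq => hεV ?_⟩
  · exact ((continuousAt_neumannFlow (p := (x, t - (t - η))) (by simpa using hη0)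
      (hu.intervalIntegrable (by linarith))).comp (x := (x, t))
      (f := fun q : ℝ × ℝ => (q.1, q.2 - (t - η))) (by fun_prop)).continuousWithinAt
  · obtain ⟨⟨hq1, -⟩, hql, hqr⟩ := hq
    have hbound := hC (t - η) (by linarith) (q.2 - (t - η)) ⟨by linarith, by linarith⟩ q.1 hq1
    rw [add_sub_cancel] at hbound
    have hsqrt : √(q.2 - (t - η)) ≤ √(2 * η) := Real.sqrt_le_sqrt (by linarith)
    exact (hbound.trans (mul_le_mul_of_nonneg_left hsqrt hC0)).trans_lt hηε

lemma continuousAt (hu : IsMildSolution α β u) (hx : x ∈ Icc (-1) 1) (ht : 0 < t) :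
    ContinuousAt (u x) t :=
  (hu.continuousOn.comp (f := fun τ => (x, τ)) (s := Ioi 0) (by fun_prop)
    fun _ hτ => ⟨hx, hτ⟩).continuousAt (Ioi_mem_nhds ht)

end IsMildSolution

end MildSolution

section MaximumPrinciple

namespace IsMildSolution

variable {α β : ℝ → ℝ} {u : ℝ → ℝ → ℝ}

lemma exists_forall_lt_initial_layer (hu : IsMildSolution α β u)
    (hinit : ∀ x ∈ Icc (-1) 1, 0 ≤ u x 0) {ε : ℝ} (hε : 0 < ε) :
    ∃ δ > 0, ∀ x ∈ Icc (-1) 1, ∀ t ∈ Ioo 0 δ, -ε < u x t := by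
  obtain ⟨C, -, hC⟩ := hu.exists_abs_sub_neumannFlow_le 1
  have hsmall : ∀ᶠ t in 𝓝[>] (0 : ℝ), C * √t < ε :=
    ((Continuous.tendsto' (by fun_prop) 0 0 (by simp)).mono_left
      nhdsWithin_le_nhds).eventually_lt_const hε
  obtain ⟨δ, hδ, hsub⟩ := mem_nhdsGT_iff_exists_Ioo_subset.1
    (hsmall.and (Ioc_mem_nhdsGT one_pos))
  refine ⟨δ, hδ, fun x hx t ht => ?_⟩
  obtain ⟨htε, ht1⟩ := hsub ht
  have hdev := hC 0 le_rfl t ht1 x hx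
  rw [zero_add] at hdev
  linarith [neg_le_of_abs_le hdev, le_neumannFlow ht.1 hu.intervalIntegrable_initial hinit x]

lemma exists_first_contact (hu : IsMildSolution α β u) (hinit : ∀ x ∈ Icc (-1) 1, 0 ≤ u x 0)
    {ε T y : ℝ} (hε : 0 < ε) (hT : 0 < T) (hy : y ∈ Icc (-1) 1) (hyT : u y T ≤ -ε * (1 + T)) :
    ∃ x ∈ Icc (-1) 1, ∃ t > 0, u x t ≤ -ε * (1 + t) ∧
      ∀ s ∈ Ico 0 t, ∀ z ∈ Icc (-1) 1, -ε * (1 + s) ≤ u z s := by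
  obtain ⟨δ, hδ, hlayer⟩ := hu.exists_forall_lt_initial_layer hinit hε
  have hlate {x t : ℝ} (hx : x ∈ Icc (-1) 1) (ht : 0 < t) (hxt : u x t ≤ -ε * (1 + t)) : δ ≤ t := by
    by_contra! hlt
    nlinarith [hlayer x hx t ⟨ht, hlt⟩]
  set K : Set (ℝ × ℝ) := Icc (-1) 1 ×ˢ Icc δ T
  have hcont : ContinuousOn (fun q : ℝ × ℝ => u q.1 q.2 + ε * (1 + q.2)) K :=
    (hu.continuousOn.mono (prod_mono_right fun t ht => hδ.trans_le ht.1)).add (by fun_prop)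
  have hcompact : IsCompact (K ∩ (fun q : ℝ × ℝ => u q.1 q.2 + ε * (1 + q.2)) ⁻¹' Iic 0) :=
    (isCompact_Icc.prod isCompact_Icc).of_isClosed_subset
      (hcont.preimage_isClosed_of_isClosed (isClosed_Icc.prod isClosed_Icc) isClosed_Iic)
      inter_subset_left
  obtain ⟨⟨x, t⟩, ⟨⟨hx, hδt, htT⟩, hxt⟩, hmin⟩ := hcompact.exists_isMinOn
    ⟨(y, T), ⟨hy, hlate hy hT hyT, le_rfl⟩, by simp only [mem_preimage, mem_Iic]; linarith⟩
    continuousOn_snd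
  simp only [mem_preimage, mem_Iic] at hxt
  refine ⟨x, hx, t, hδ.trans_le hδt, by linarith, fun s hs z hz => ?_⟩
  rcases hs.1.eq_or_lt with rfl | hs0
  · linarith [hinit z hz]
  by_contra! hzs
  have hmem : (z, s) ∈ K ∩ (fun q : ℝ × ℝ => u q.1 q.2 + ε * (1 + q.2)) ⁻¹' Iic 0 :=
    ⟨⟨hz, hlate hz hs0 hzs.le, hs.2.le.trans htT⟩, by simp only [mem_preimage, mem_Iic]; linarith⟩
  exact hs.2.not_ge (hmin hmem)

lemma eventually_flux_nonneg (hu : IsMildSolution α β u) {γ : ℝ → ℝ} {e t : ℝ}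
    (he : e ∈ Icc (-1) 1) (hγ : ∀ τ, 0 < τ → u e τ < 0 → 0 ≤ γ τ) (ht : 0 < t) (hneg : u e t < 0) :
    ∀ᶠ τ in 𝓝 t, 0 ≤ γ τ := by
  filter_upwards [(hu.continuousAt he ht).eventually_lt_const hneg, lt_mem_nhds ht]
    with τ hτ hτ0 using hγ τ hτ0 hτ

theorem nonneg (hu : IsMildSolution α β u) (hinit : ∀ x ∈ Icc (-1) 1, 0 ≤ u x 0)
    (hα : ∀ t, 0 < t → u 1 t < 0 → 0 ≤ α t) (hβ : ∀ t, 0 < t → u (-1) t < 0 → 0 ≤ β t)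
    {y T : ℝ} (hy : y ∈ Icc (-1) 1) (hT : 0 ≤ T) : 0 ≤ u y T := by
  rcases hT.eq_or_lt with rfl | hT
  · exact hinit y hy
  by_contra! hneg
  obtain ⟨ε, hε, hyT⟩ : ∃ ε > 0, u y T ≤ -ε * (1 + T) := by
    refine ⟨-u y T / (1 + T), div_pos (neg_pos.2 hneg) (by positivity), ?_⟩
    field_simp
    rfl
  obtain ⟨x, hx, t, ht, hcontact, hbefore⟩ := hu.exists_first_contact hinit hε hT hy hyT
  have hxt : u x t < 0 := by nlinarith
  have hright := eventually_le_boundaryPotential hu.isFlux_right (.inl rfl) hx ht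
    (by positivity : 0 < ε / 3)
    fun hx1 => hu.eventually_flux_nonneg (by norm_num) hα ht (hx1 ▸ hxt)
  have hleft := eventually_le_boundaryPotential hu.isFlux_left (.inr rfl) hx ht
    (by positivity : 0 < ε / 3)
    fun hx1 => hu.eventually_flux_nonneg (by norm_num) hβ ht (hx1 ▸ hxt)
  obtain ⟨h, hhright, hhleft, hh, hht⟩ :=
    (hright.and (hleft.and (Ioc_mem_nhdsGT ht))).exists
  have hflow : -ε * (1 + (t - h)) ≤ neumannFlow h (fun z => u z (t - h)) x :=
    le_neumannFlow hh (hu.intervalIntegrable (sub_nonneg.2 hht))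
      (hbefore (t - h) ⟨sub_nonneg.2 hht, sub_lt_self t hh⟩) x
  have hrestart := hu.restart (sub_nonneg.2 hht) hh hx
  rw [sub_add_cancel] at hrestart
  nlinarith

end IsMildSolution

end MaximumPrinciple

section Monotonicity

lemma isFlux_const_mul_one_sub_pow {w : ℝ → ℝ} (hw : Measurable w)
    (hw01 : ∀ t, 0 ≤ t → w t ∈ Icc 0 1) (c : ℝ) (K : ℕ) : IsFlux fun t => c * (1 - w t ^ K) := by
  refine ⟨measurable_const.mul (measurable_const.sub (hw.pow_const K)), |c|, fun t ht => ?_⟩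
  have hpow0 : 0 ≤ w t ^ K := pow_nonneg (hw01 t ht).1 K
  have hpow1 : w t ^ K ≤ 1 := pow_le_one₀ (hw01 t ht).1 (hw01 t ht).2
  rw [abs_mul]
  exact mul_le_of_le_one_right (abs_nonneg c) (abs_le.2 ⟨by linarith, by linarith⟩)

lemma IsMacroSolution.isMildSolution {j : ℝ} {K : ℕ} {ρ₀ : ℝ → ℝ} {ρ : ℝ → ℝ → ℝ}
    (hρ : IsMacroSolution j K ρ₀ ρ) :
    IsMildSolution (fun t => j / 2 * (1 - ρ 1 t ^ K)) (fun t => -(j / 2) * (1 - (1 - ρ (-1) t) ^ K))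
      ρ := by
  obtain ⟨hmeas, h01, hinit, hequation⟩ := hρ
  have hright : IsFlux fun t => j / 2 * (1 - ρ 1 t ^ K) :=
    isFlux_const_mul_one_sub_pow (w := ρ 1) hmeas.of_uncurry_left (h01 1 (by norm_num)) _ K
  have hleft : IsFlux fun t => -(j / 2) * (1 - (1 - ρ (-1) t) ^ K) :=
    isFlux_const_mul_one_sub_pow (w := fun t => 1 - ρ (-1) t)
      (measurable_const.sub hmeas.of_uncurry_left)
      (fun t ht => Icc.one_sub_mem (h01 (-1) (by norm_num) t ht)) _ K
  refine ⟨?_, hright, hleft, fun t ht x hx => ?_⟩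
  · rw [intervalIntegrable_iff_integrableOn_Ioc_of_le (by norm_num)]
    refine Measure.integrableOn_of_bounded (M := 1) measure_Ioc_lt_top.ne
      hmeas.of_uncurry_right.aestronglyMeasurable ?_
    filter_upwards [ae_restrict_mem measurableSet_Ioc] with z hz
    have hz01 := h01 z (Ioc_subset_Icc_self hz) 0 le_rfl
    rw [Real.norm_of_nonneg hz01.1]
    exact hz01.2
  · rw [hequation t ht x hx, neumannFlow_congr hinit, neumannFlow, add_assoc]
    congr 1
    rw [boundaryPotential, boundaryPotential,
      ← intervalIntegral.integral_add (intervalIntegrable_P_mul_flux hright ht.le le_rfl x 1)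
        (intervalIntegrable_P_mul_flux hleft ht.le le_rfl x (-1)),
      ← intervalIntegral.integral_const_mul]
    refine intervalIntegral.integral_congr fun s _ => ?_
    ring

theorem macro_monotone_general (j : ℝ) (hj : 0 ≤ j) (K : ℕ) (ρ₀ σ₀ : ℝ → ℝ)
    (hle : ∀ r ∈ Icc (-1 : ℝ) 1, ρ₀ r ≤ σ₀ r) (ρ σ : ℝ → ℝ → ℝ)
    (hρ : IsMacroSolution j K ρ₀ ρ) (hσ : IsMacroSolution j K σ₀ σ) :
    ∀ r ∈ Icc (-1 : ℝ) 1, ∀ t : ℝ, 0 ≤ t → ρ r t ≤ σ r t := by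
  intro r hr t ht
  have hdiff := hσ.isMildSolution.sub hρ.isMildSolution
  obtain ⟨-, hρ01, hρinit, -⟩ := hρ
  obtain ⟨-, hσ01, hσinit, -⟩ := hσ
  have hone : (1 : ℝ) ∈ Icc (-1) 1 := by norm_num
  have hneg_one : (-1 : ℝ) ∈ Icc (-1) 1 := by norm_num
  refine sub_nonneg.1
    (hdiff.nonneg (fun x hx => ?_) (fun s hs hlt => ?_) (fun s hs hlt => ?_) hr ht)
  · rw [hρinit x hx, hσinit x hx]
    exact sub_nonneg.2 (hle x hx)
  · have hpow : σ 1 s ^ K ≤ ρ 1 s ^ K :=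
      pow_le_pow_left₀ (hσ01 1 hone s hs.le).1 (by linarith) K
    nlinarith
  · have hpow : (1 - ρ (-1) s) ^ K ≤ (1 - σ (-1) s) ^ K :=
      pow_le_pow_left₀ (by linarith [(hρ01 (-1) hneg_one s hs.le).2]) (by linarith) K
    nlinarith

end Monotonicity

/-- Monotonicity of the macroscopic equation: if `ρ₀ ≤ σ₀` on `[−1,1]` and `ρ`, `σ`
are solutions of the macroscopic integral equation with initial data `ρ₀`, `σ₀`
respectively, having continuous boundary traces, then `ρ(r,t) ≤ σ(r,t)` for all
`r ∈ [−1,1]` and `t ≥ 0`. -/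
theorem macro_monotone (j : ℝ) (hj : 0 < j) (K : ℕ) (hK : 1 ≤ K)
    (ρ₀ σ₀ : ℝ → ℝ) (hρ₀m : Measurable ρ₀) (hσ₀m : Measurable σ₀)
    (hρ₀01 : ∀ r ∈ Set.Icc (-1 : ℝ) 1, ρ₀ r ∈ Set.Icc (0 : ℝ) 1)
    (hσ₀01 : ∀ r ∈ Set.Icc (-1 : ℝ) 1, σ₀ r ∈ Set.Icc (0 : ℝ) 1)
    (hle : ∀ r ∈ Set.Icc (-1 : ℝ) 1, ρ₀ r ≤ σ₀ r)
    (ρ σ : ℝ → ℝ → ℝ)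
    (hρ : IsMacroSolution j K ρ₀ ρ) (hσ : IsMacroSolution j K σ₀ σ)
    (hρbp : ContinuousOn (fun t => ρ 1 t) (Set.Ici (0 : ℝ)))
    (hρbm : ContinuousOn (fun t => ρ (-1) t) (Set.Ici (0 : ℝ)))
    (hσbp : ContinuousOn (fun t => σ 1 t) (Set.Ici (0 : ℝ)))
    (hσbm : ContinuousOn (fun t => σ (-1) t) (Set.Ici (0 : ℝ))) :
    ∀ r ∈ Set.Icc (-1 : ℝ) 1, ∀ t : ℝ, 0 ≤ t → ρ r t ≤ σ r t :=
  macro_monotone_general j hj.le K ρ₀ σ₀ hle ρ σ hρ hσ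
end
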